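/- Let q = (e^{2πiλ₁},…,e^{2πiλ_ν}) ∈ (ℂ*)^ν be non-resonant and satisfy the Bruno condition 𝓑(q) < ∞. Let a = (a₁,…,a_ν) be holomorphic on a neighborhood of 0 in ℂ^ν with a(0) = 0 and Da(0) = 0, and set g = R_q ∘ (id + a). Then the linearization problem has a convergent solution: there exist r > 0 and a holomorphic map h : 𝔻_r^ν → ℂ^ν with h(0) = 0 and Dh(0) = id, such that g(h(z)) = h(R_q z) for all z in some neighborhood of 0. -/

import Mathlib

open Complex Metric

noncomputable section

/-- The set of integers inside ℂ. -/
def intsC : Set ℂ := Set.range ((↑·) : ℤ → ℂ)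

/-- `Ω(k) = min ({1} ∪ {d(m·λ - λ_j, ℤ) : j ∈ [ν], m ∈ ℕ^ν, 2 ≤ |m| ≤ k+1})`. -/
def omegaD {ν : ℕ} (lam : Fin ν → ℂ) (k : ℕ) : ℝ :=
  sInf ({1} ∪ {x : ℝ | ∃ j : Fin ν, ∃ m : Fin ν → ℕ,
    2 ≤ ∑ i, m i ∧ ∑ i, m i ≤ k + 1 ∧
    x = Metric.infDist ((∑ i, (m i : ℂ) * lam i) - lam j) intsC})

/-- The `k`-th term (`k ≥ 1`, shifted to `k : ℕ`) of the Bruno series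
`𝓑(q) = ∑_{k≥1} (1/k - 1/(k+1)) log(1/Ω(k))`. -/
def brunoTermD {ν : ℕ} (lam : Fin ν → ℂ) (k : ℕ) : ℝ :=
  ((1 : ℝ) / (k + 1) - 1 / (k + 2)) * Real.log (1 / omegaD lam (k + 1))

/-- `q ∈ (ℂ*)^ν` is non-resonant if `q_i ≠ q^m` for all `i` and all `m ∈ ℕ^ν` with `|m| ≥ 2`. -/
def NonResonantQ {ν : ℕ} (q : Fin ν → ℂ) : Prop :=
  ∀ i : Fin ν, ∀ m : Fin ν → ℕ, 2 ≤ ∑ j, m j → q i ≠ ∏ j, q j ^ m j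


theorem hl_pi_summable {ι : Type} [Fintype ι] {β : ι → Type} {𝕜 : Type} [RCLike 𝕜]
    (f : ∀ i, β i → 𝕜) (hf : ∀ i, Summable (fun b => ‖f i b‖)) :
    Summable (fun p : ∀ i, β i => ‖∏ i, f i (p i)‖) := by
  classical
  refine summable_of_sum_le (c := ∏ i, ∑' b, ‖f i b‖) (fun _ => norm_nonneg _) ?_
  intro F
  calc ∑ p ∈ F, ‖∏ i, f i (p i)‖ 
      ≤ ∑ p ∈ Fintype.piFinset (fun i => F.image (fun p => p i)), ‖∏ i, f i (p i)‖ := by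
        apply Finset.sum_le_sum_of_subset_of_nonneg
        · intro p hp
          rw [Fintype.mem_piFinset]
          intro i
          exact Finset.mem_image_of_mem _ hp
        · intros; positivity
    _ = ∏ i, ∑ b ∈ F.image (fun p => p i), ‖f i b‖ := by
        rw [Finset.prod_univ_sum]
        simp only [norm_prod]
    _ ≤ _ := by
        apply Finset.prod_le_prod
        · intros; positivity
        · intro i _
          exact (hf i).sum_le_tsum _ (fun _ _ => norm_nonneg _)

theorem hl_pi_hasSum {ι : Type} [Fintype ι] {β : ι → Type} {𝕜 : Type} [RCLike 𝕜]
    (f : ∀ i, β i → 𝕜) (hf : ∀ i, Summable (fun b => ‖f i b‖)) :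
    HasSum (fun p : ∀ i, β i => ∏ i, f i (p i)) (∏ i, ∑' b, f i b) := by
  classical
  have h1 : Summable (fun p : ∀ i, β i => ∏ i, f i (p i)) := (hl_pi_summable f hf).of_norm
  have h2 := h1.hasSum
  have ht : Filter.Tendsto (fun t : ∀ i, Finset (β i) => Fintype.piFinset t) Filter.atTop
      Filter.atTop := by
    apply Filter.tendsto_atTop_finset_of_monotone
    · intro s t hst
      exact Fintype.piFinset_subset _ _ hst
    · intro p
      exact ⟨fun i => {p i}, by simp⟩
  have h3 := Filter.Tendsto.comp (show Filter.Tendsto _ Filter.atTop _ from h2) ht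
  have h4 : Filter.Tendsto (fun t : ∀ i, Finset (β i) => ∏ i, ∑ b ∈ t i, f i b) Filter.atTop
      (nhds (∏ i, ∑' b, f i b)) := by
    apply tendsto_finsetProd
    intro i _
    have := ((hf i).of_norm).hasSum
    have this' : Filter.Tendsto (fun t : Finset (β i) => ∑ b ∈ t, f i b) Filter.atTop _ := this
    refine this'.comp (?_ : Filter.Tendsto (fun t : ∀ i, Finset (β i) => t i) _ _)
    refine Filter.tendsto_atTop_atTop.2 fun b => ⟨Function.update (fun _ => ∅) i b, fun c hc => ?_⟩
    have := hc i
    simpa using this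
  have h5 := tendsto_nhds_unique h3 (h4.congr (fun t => by
    simp [Finset.prod_univ_sum]))
  rw [← h5]; exact h2

theorem hl_fderiv_bound' {E : Type} [NormedAddCommGroup E] [NormedSpace ℂ E] {f : E → ℂ}
    {x : E} {R M : ℝ} (hR : 0 < R) (hf : DifferentiableOn ℂ f (ball x R))
    (hM : ∀ z ∈ ball x R, ‖f z‖ ≤ M) : ‖fderiv ℂ f x‖ ≤ (2 * M) / R := by
  have hM0 : 0 ≤ M := (norm_nonneg _).trans (hM x (mem_ball_self hR))
  refine le_of_forall_pos_le_add fun ε hε => ?_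
  have : ‖fderiv ℂ f x‖ ≤ (2 * M + ε * R) / R := by
    apply Complex.norm_fderiv_le_div_of_mapsTo_ball hf _ hR
    intro z hz
    rw [mem_closedBall, dist_eq_norm]
    have := hM z hz
    have := hM x (mem_ball_self hR)
    have := norm_sub_le (f z) (f x)
    have : 0 < ε * R := by positivity
    linarith
  rw [add_div, mul_div_cancel_right₀ _ hR.ne'] at this
  exact this

theorem hl_diff_tsum {E : Type} [NormedAddCommGroup E] [NormedSpace ℂ E] {ι : Type}
    {f : ι → E → ℂ} {u : ι → ℝ} {R : ℝ} (hR : 0 < R)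
    (hf : ∀ i, DifferentiableOn ℂ (f i) (ball 0 R)) (hu : Summable u)
    (hfu : ∀ i, ∀ z ∈ ball (0 : E) R, ‖f i z‖ ≤ u i) :
    DifferentiableOn ℂ (fun z => ∑' i, f i z) (ball 0 (R / 2)) := by
  intro z hz
  have key : ∀ x ∈ ball (0 : E) (R / 2), ball x (R / 2) ⊆ ball 0 R := by
    intro x hx
    apply ball_subset_ball'
    rw [mem_ball] at hx
    linarith
  have := hasFDerivAt_tsum_of_isPreconnected (𝕜 := ℂ) (f := f) (f' := fun i x => fderiv ℂ (f i) x)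
    (u := fun i => 2 * u i / (R / 2)) (s := ball (0 : E) (R / 2)) (x₀ := 0) (x := z)
    ((hu.mul_left 2).div_const _) isOpen_ball (convex_ball _ _).isPreconnected
    (fun i x hx => ((hf i).differentiableAt (isOpen_ball.mem_nhds
      (ball_subset_ball (by linarith) hx))).hasFDerivAt)
    (fun i x hx => hl_fderiv_bound' (by positivity) ((hf i).mono (key x hx))
      (fun y hy => hfu i y (key x hx hy)))
    (mem_ball_self (by positivity))
    (Summable.of_norm_bounded hu (fun i => hfu i 0 (mem_ball_self hR))) hz
  exact this.differentiableAt.differentiableWithinAt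

theorem hl_circle_diff {n : ℕ} {f : (Fin (n + 1) → ℂ) → ℂ} {b r M : ℝ} (hr : 0 < r) (hrb : r < b)
    (hf : DifferentiableOn ℂ f (ball 0 b)) (hM : ∀ z ∈ ball (0 : Fin (n + 1) → ℂ) b, ‖f z‖ ≤ M)
    {g : ℝ → ℂ} (hg : Continuous g) :
    DifferentiableOn ℂ (fun z : Fin n → ℂ => ∫ θ in (0 : ℝ)..(2 * Real.pi),
      g θ * f (Fin.cons (circleMap 0 r θ) z)) (ball 0 b) := by
  intro x₀ hx₀
  have hb : 0 < b := hr.trans hrb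
  rw [mem_ball_zero_iff] at hx₀
  set δ := (b - ‖x₀‖) / 2 with hδ
  have hδ0 : 0 < δ := by rw [hδ]; linarith
  have hcons : ∀ θ : ℝ, ∀ x ∈ ball (0 : Fin n → ℂ) b,
      (Fin.cons (circleMap 0 r θ) x : Fin (n + 1) → ℂ) ∈ ball (0 : Fin (n + 1) → ℂ) b := by
    intro θ x hx
    rw [mem_ball_zero_iff] at hx ⊢
    rw [pi_norm_lt_iff hb] at hx ⊢
    intro i
    refine Fin.cases ?_ (fun i => ?_) i
    · simp [circleMap, abs_of_pos hr, hrb]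
    · simpa using hx i
  have hsub : ∀ x ∈ ball x₀ δ, ball x δ ⊆ ball (0 : Fin n → ℂ) b := by
    intro x hx
    apply ball_subset_ball'
    have h1 : dist x 0 ≤ dist x x₀ + dist x₀ 0 := dist_triangle _ _ _
    rw [mem_ball] at hx
    rw [dist_zero_right x₀] at h1
    rw [hδ] at *
    linarith
  have hsub' : ball x₀ δ ⊆ ball (0 : Fin n → ℂ) b := hsub x₀ (mem_ball_self hδ0)
  -- the affine map
  obtain ⟨L, hcd⟩ : ∃ L : (Fin n → ℂ) →L[ℂ] (Fin (n + 1) → ℂ), ∀ θ : ℝ, ∀ x : Fin n → ℂ,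
      HasFDerivAt (fun x : Fin n → ℂ => (Fin.cons (circleMap 0 r θ) x : Fin (n + 1) → ℂ)) L x := by
    refine ⟨ContinuousLinearMap.pi (Fin.cons (0 : (Fin n → ℂ) →L[ℂ] ℂ)
      (fun i => (ContinuousLinearMap.proj i : (Fin n → ℂ) →L[ℂ] ℂ))), fun θ x => ?_⟩
    rw [hasFDerivAt_pi]
    intro i
    refine Fin.cases ?_ (fun i => ?_) i
    · simp only [Fin.cons_zero]
      exact hasFDerivAt_const _ _
    · simp only [Fin.cons_succ]
      exact hasFDerivAt_apply i x
  have hcc : ∀ x : Fin n → ℂ, Continuous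
      (fun θ : ℝ => (Fin.cons (circleMap 0 r θ) x : Fin (n + 1) → ℂ)) := by
    intro x
    rw [continuous_pi_iff]
    intro i
    refine Fin.cases ?_ (fun i => ?_) i
    · simpa using continuous_circleMap 0 r
    · simpa using continuous_const
  have hFc : ∀ x ∈ ball (0 : Fin n → ℂ) b,
      Continuous (fun θ : ℝ => g θ * f (Fin.cons (circleMap 0 r θ) x)) := by
    intro x hx
    refine hg.mul ?_
    exact hf.continuousOn.comp_continuous (hcc x) (fun θ => hcons θ x hx)
  have hpd : ∀ θ : ℝ, ∀ x ∈ ball (0 : Fin n → ℂ) b, HasFDerivAt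
      (fun x : Fin n → ℂ => f (Fin.cons (circleMap 0 r θ) x))
      ((fderiv ℂ f (Fin.cons (circleMap 0 r θ) x)).comp L) x := by
    intro θ x hx
    exact ((hf.differentiableAt (isOpen_ball.mem_nhds (hcons θ x hx))).hasFDerivAt).comp x
      (hcd θ x)
  have hmeas : Measurable (fun θ : ℝ => g θ • ((fderiv ℂ f (Fin.cons (circleMap 0 r θ) x₀)).comp L)) := by
    refine hg.measurable.smul ?_
    have h1 : Measurable (fun θ : ℝ => fderiv ℂ f (Fin.cons (circleMap 0 r θ) x₀)) :=
      (measurable_fderiv ℂ f).comp (hcc x₀).measurable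
    have h2 : Continuous (fun A : (Fin (n + 1) → ℂ) →L[ℂ] ℂ => A.comp L) := by fun_prop
    exact h2.measurable.comp h1
  have := hasFDerivAt_integral_of_dominated_of_fderiv_le (𝕜 := ℂ)
    (μ := MeasureTheory.volume.restrict (Set.Ioc (0 : ℝ) (2 * Real.pi)))
    (F := fun (x : Fin n → ℂ) (θ : ℝ) => g θ * f (Fin.cons (circleMap 0 r θ) x))
    (F' := fun (x : Fin n → ℂ) (θ : ℝ) => g θ • ((fderiv ℂ f (Fin.cons (circleMap 0 r θ) x)).comp L))
    (bound := fun θ => ‖g θ‖ * (2 * M / δ)) (s := ball x₀ δ) (x₀ := x₀)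
    (ball_mem_nhds _ hδ0)
    (by
      filter_upwards [ball_mem_nhds x₀ hδ0] with x hx
      exact (hFc x (hsub' hx)).aestronglyMeasurable)
    ((hFc x₀ (hsub' (mem_ball_self hδ0))).integrableOn_Ioc)
    (hmeas.aestronglyMeasurable)
    (by
      filter_upwards with θ x hx
      rw [norm_smul]
      gcongr
      rw [← (hpd θ x (hsub' hx)).fderiv]
      refine hl_fderiv_bound' hδ0 ?_ ?_
      · intro y hy
        exact (hpd θ y (hsub x hx hy)).differentiableAt.differentiableWithinAt
      · intro y hy
        exact hM _ (hcons θ y (hsub x hx hy)))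
    ((by fun_prop : Continuous fun θ => ‖g θ‖ * (2 * M / δ)).integrableOn_Ioc)
    (by
      filter_upwards with θ x hx
      exact (hpd θ x (hsub' hx)).const_mul (g θ))
  simp only [intervalIntegral.integral_of_le Real.two_pi_pos.le]
  exact this.differentiableAt.differentiableWithinAt

theorem hl_geom {n : ℕ} {t : Fin n → ℝ} (ht0 : ∀ i, 0 ≤ t i) (ht : ∀ i, t i < 1) :
    Summable (fun m : Fin n → ℕ => ∏ i, t i ^ m i) := by
  have := hl_pi_summable (𝕜 := ℝ) (β := fun _ : Fin n => ℕ) (fun i k => t i ^ k) (fun i => by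
    simpa [abs_of_nonneg (ht0 i)] using summable_geometric_of_lt_one (ht0 i) (ht i))
  refine this.congr (fun m => ?_)
  rw [Real.norm_of_nonneg]
  exact Finset.prod_nonneg (fun i _ => pow_nonneg (ht0 i) _)

theorem hl_ps_summable {n : ℕ} {c : (Fin n → ℕ) → ℂ} {r M : ℝ} (hr : 0 < r)
    (hc : ∀ m, ‖c m‖ ≤ M / r ^ (∑ i, m i)) {z : Fin n → ℂ} (hz : ‖z‖ < r) :
    Summable (fun m : Fin n → ℕ => ‖c m * ∏ i, z i ^ m i‖) := by
  have h := (hl_geom (t := fun i => ‖z i‖ / r) (fun i => by positivity)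
    (fun i => by rw [div_lt_one hr]; exact (norm_le_pi_norm z i).trans_lt hz)).mul_left M
  refine Summable.of_nonneg_of_le (fun _ => norm_nonneg _) (fun m => ?_) h
  rw [norm_mul, norm_prod]
  calc ‖c m‖ * ∏ i, ‖z i ^ m i‖ ≤ (M / r ^ (∑ i, m i)) * ∏ i, ‖z i ^ m i‖ := by
        gcongr
        exact hc m
    _ = _ := by
        simp only [norm_pow, div_pow, Finset.prod_div_distrib, Finset.prod_pow_eq_pow_sum]
        ring

theorem hl_ps (n : ℕ) : ∀ (f : (Fin n → ℂ) → ℂ) (b r M : ℝ), 0 < r → r < b →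
    DifferentiableOn ℂ f (ball 0 b) → (∀ z ∈ ball (0 : Fin n → ℂ) b, ‖f z‖ ≤ M) →
    ∃ c : (Fin n → ℕ) → ℂ, (∀ m, ‖c m‖ ≤ M / r ^ (∑ i, m i)) ∧
      ∀ z ∈ ball (0 : Fin n → ℂ) r, HasSum (fun m => c m * ∏ i, z i ^ m i) (f z) := by
  induction n with
  | zero =>
    intro f b r M hr hrb hf hM
    refine ⟨fun _ => f 0, fun m => ?_, fun z hz => ?_⟩
    · simpa using hM 0 (mem_ball_self (hr.trans hrb))
    · have : z = 0 := Subsingleton.elim _ _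
      subst this
      simp
  | succ n ih =>
    intro f b r M hr hrb hf hM
    have hb : 0 < b := hr.trans hrb
    have hcons : ∀ ζ : ℂ, ‖ζ‖ ≤ r → ∀ x ∈ ball (0 : Fin n → ℂ) b,
        (Fin.cons ζ x : Fin (n + 1) → ℂ) ∈ ball (0 : Fin (n + 1) → ℂ) b := by
      intro ζ hζ x hx
      rw [mem_ball_zero_iff] at hx ⊢
      rw [pi_norm_lt_iff hb] at hx ⊢
      intro i
      refine Fin.cases ?_ (fun i => ?_) i
      · simpa using hζ.trans_lt hrb
      · simpa using hx i
    have hM0 : 0 ≤ M := (norm_nonneg _).trans (hM 0 (mem_ball_self hb))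
    let P : (Fin n → ℂ) → FormalMultilinearSeries ℂ ℂ ℂ :=
      fun z => cauchyPowerSeries (fun ζ => f (Fin.cons ζ z)) 0 r
    let C : ℕ → (Fin n → ℂ) → ℂ := fun k z => (P z).coeff k
    have hCd : ∀ k, DifferentiableOn ℂ (C k) (ball 0 b) := by
      intro k
      have hne : ∀ θ : ℝ, circleMap 0 r θ ≠ 0 := fun θ => circleMap_ne_center hr.ne'
      have hg : Continuous (fun θ : ℝ => deriv (circleMap 0 r) θ *
          ((1 / circleMap 0 r θ) ^ k * (circleMap 0 r θ)⁻¹)) := by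
        simp only [deriv_circleMap]
        have h1 := continuous_circleMap 0 r
        have h2 : Continuous (fun θ => (circleMap 0 r θ)⁻¹) := h1.inv₀ hne
        simp only [one_div]
        fun_prop
      have h := (hl_circle_diff hr hrb hf hM hg).const_mul ((2 * Real.pi * I : ℂ)⁻¹)
      refine h.congr (fun z hz => ?_)
      change (P z) k (fun _ => 1) = _
      simp only [P]
      rw [cauchyPowerSeries_apply]
      simp only [circleIntegral, smul_eq_mul, sub_zero]
      congr 1
      congr 1
      ext θ
      ring
    have hCM : ∀ k, ∀ z ∈ ball (0 : Fin n → ℂ) b, ‖C k z‖ ≤ M / r ^ k := by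
      intro k z hz
      simp only [C]
      rw [← FormalMultilinearSeries.norm_apply_eq_norm_coef]
      refine (norm_cauchyPowerSeries_le _ _ _ _).trans ?_
      have h1 : ∫ θ : ℝ in (0)..2 * Real.pi, ‖f (Fin.cons (circleMap 0 r θ) z)‖ ≤
          M * |2 * Real.pi - 0| := by
        refine (le_abs_self _).trans ?_
        rw [← Real.norm_eq_abs]
        apply intervalIntegral.norm_integral_le_of_norm_le_const
        intro θ _
        rw [norm_norm]
        exact hM _ (hcons _ (by simp [circleMap, abs_of_pos hr]) z hz)
      rw [sub_zero, abs_of_pos Real.two_pi_pos] at h1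
      rw [abs_of_pos hr, inv_pow, ← div_eq_mul_inv]
      gcongr
      rw [inv_mul_le_iff₀ Real.two_pi_pos]
      linarith
    have hCs : ∀ z ∈ ball (0 : Fin n → ℂ) b, ∀ ζ : ℂ, ‖ζ‖ < r →
        HasSum (fun k => ζ ^ k * C k z) (f (Fin.cons ζ z)) := by
      intro z hz ζ hζ
      obtain ⟨R, hR⟩ : ∃ R : NNReal, (R : ℝ) = r := ⟨r.toNNReal, Real.coe_toNNReal r hr.le⟩
      have hd : DifferentiableOn ℂ (fun ζ => f (Fin.cons ζ z)) (closedBall 0 (R : ℝ)) := by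
        intro w hw
        rw [mem_closedBall_zero_iff, hR] at hw
        have h1 : DifferentiableAt ℂ (fun ζ : ℂ => (Fin.cons ζ z : Fin (n + 1) → ℂ)) w := by
          rw [differentiableAt_pi]
          intro i
          refine Fin.cases ?_ (fun i => ?_) i
          · simp
          · simp
        have h2 := hf.differentiableAt (isOpen_ball.mem_nhds (hcons w hw z hz))
        exact (DifferentiableAt.comp w h2 h1).differentiableWithinAt
      have h := (hd.hasFPowerSeriesOnBall (by rw [← NNReal.coe_pos, hR]; exact hr)).hasSum (y := ζ) (by
        simp only [mem_eball_zero_iff]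
        rw [← ofReal_norm]
        rw [ENNReal.ofReal_lt_iff_lt_toReal (norm_nonneg _) ENNReal.coe_ne_top]
        simpa [hR] using hζ)
      rw [zero_add, hR] at h
      refine h.congr_fun (fun k => ?_)
      rw [FormalMultilinearSeries.apply_eq_pow_smul_coeff, smul_eq_mul]
    choose c hc1 hc2 using fun k => ih (C k) b r (M / r ^ k) hr hrb (hCd k) (hCM k)
    have hbound : ∀ m : Fin (n + 1) → ℕ, ‖c (m 0) (Fin.tail m)‖ ≤ M / r ^ (∑ i, m i) := by
      intro m
      refine (hc1 _ _).trans_eq ?_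
      rw [Fin.sum_univ_succ, pow_add, div_div]
      rfl
    refine ⟨fun m => c (m 0) (Fin.tail m), hbound, fun z hz => ?_⟩
    rw [mem_ball_zero_iff] at hz
    have hs := (hl_ps_summable (c := fun m : Fin (n + 1) → ℕ => c (m 0) (Fin.tail m)) hr hbound hz).of_norm
    have hz0 : ‖z 0‖ < r := (norm_le_pi_norm z 0).trans_lt hz
    have hzt : ‖Fin.tail z‖ < r := by
      rw [pi_norm_lt_iff hr] at hz ⊢
      intro i
      exact hz i.succ
    have hs' := (Fin.consEquiv (fun _ : Fin (n + 1) => ℕ)).summable_iff.2 hs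
    have h1 := hs'.hasSum.prod_fiberwise (g := fun k => z 0 ^ k * C k (Fin.tail z)) (fun k => by
      have := (hc2 k (Fin.tail z) (by simpa using hzt)).mul_left (z 0 ^ k)
      refine this.congr_fun (fun m => ?_)
      have ht : Fin.tail ((Fin.consEquiv fun _ : Fin (n + 1) => ℕ) (k, m)) = m := rfl
      simp only [Function.comp, ht]
      simp only [Fin.consEquiv_apply, Fin.cons_zero, Fin.prod_univ_succ, Fin.cons_succ]
      simp only [Fin.tail]
      ring)
    have h2 := hCs (Fin.tail z) (by rw [mem_ball_zero_iff]; linarith) (z 0) hz0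
    rw [Fin.cons_self_tail] at h2
    have h3 := h1.unique h2
    rw [← (Fin.consEquiv (fun _ : Fin (n + 1) => ℕ)).hasSum_iff, ← h3]
    exact hs'.hasSum

/-- Multi-indices of length at least two. -/
abbrev HLIdx (n : ℕ) : Type := {m : Fin n → ℕ // 2 ≤ ∑ i, m i}

theorem hl_prod_norm_le {n : ℕ} (z : Fin n → ℂ) {s : ℝ} (hz : ‖z‖ ≤ s) (m : Fin n → ℕ) :
    ‖∏ i, z i ^ m i‖ ≤ s ^ (∑ i, m i) := by
  rw [norm_prod, ← Finset.prod_pow_eq_pow_sum]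
  apply Finset.prod_le_prod
  · intros; positivity
  · intro i _
    rw [norm_pow]
    gcongr
    exact (norm_le_pi_norm z i).trans hz

theorem hl_pow_two_le {R s : ℝ} (hR : 0 < R) (hs : 0 ≤ s) (hsR : s ≤ R) {k : ℕ} (hk : 2 ≤ k) :
    s ^ k ≤ R ^ k * (s / R) ^ 2 := by
  obtain ⟨l, rfl⟩ := Nat.exists_eq_add_of_le hk
  have : R ^ (2 + l) * (s / R) ^ 2 = s ^ 2 * R ^ l := by
    field_simp
    ring
  rw [this, pow_add]
  gcongr

theorem hl_expand {n : ℕ} {f : (Fin n → ℂ) → ℂ} {b : ℝ} (hb : 0 < b)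
    (hf : DifferentiableOn ℂ f (ball 0 b)) (f0 : f 0 = 0) (hD : fderiv ℂ f 0 = 0) :
    ∃ R > 0, ∃ c : HLIdx n → ℂ, Summable (fun m : HLIdx n => ‖c m‖ * R ^ (∑ i, m.1 i)) ∧
      ∀ z : Fin n → ℂ, ‖z‖ ≤ R → HasSum (fun m : HLIdx n => c m * ∏ i, z i ^ m.1 i) (f z) := by
  have hdiff : DifferentiableAt ℂ f 0 := hf.differentiableAt (ball_mem_nhds _ hb)
  obtain ⟨b₁, hb₁, hb₁'⟩ := Metric.continuousAt_iff.1 hdiff.continuousAt 1 one_pos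
  set b₂ := min b b₁ with hb₂
  have hb₂0 : 0 < b₂ := lt_min hb hb₁
  obtain ⟨c, hc1, hc2⟩ := hl_ps n f b₂ (b₂ / 2) 1 (by positivity) (by linarith)
    (hf.mono (ball_subset_ball (min_le_left _ _))) (fun z hz => by
      have := hb₁' (show dist z 0 < b₁ from hz.trans_le (min_le_right _ _))
      rw [f0, dist_zero_right] at this
      exact this.le)
  set R := b₂ / 4 with hR
  have hR0 : 0 < R := by positivity
  have hRr : R < b₂ / 2 := by rw [hR]; linarith
  have hsum : Summable (fun m : Fin n → ℕ => ‖c m‖ * R ^ (∑ i, m i)) := by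
    have hn : ‖(fun _ => (R : ℂ) : Fin n → ℂ)‖ < b₂ / 2 := by
      rw [pi_norm_lt_iff (by positivity)]
      intro i
      simpa [abs_of_pos hR0] using hRr
    have := hl_ps_summable (by positivity) hc1 hn
    refine this.congr (fun m => ?_)
    simp [abs_of_pos hR0, Finset.prod_pow_eq_pow_sum]
  have hc0 : c 0 = 0 := by
    have h := hc2 0 (mem_ball_self (by positivity))
    rw [f0] at h
    have h2 := hasSum_single (f := fun m : Fin n → ℕ => c m * ∏ i, (0 : Fin n → ℂ) i ^ m i) 0
      (fun m hm => by
        obtain ⟨i, hi⟩ := Function.ne_iff.1 hm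
        have : ∏ i, (0 : Fin n → ℂ) i ^ m i = 0 :=
          Finset.prod_eq_zero (Finset.mem_univ i) (by simpa using hi)
        rw [this, mul_zero])
    have h3 := h2.unique h
    simpa using h3
  have hc1' : ∀ i : Fin n, c (Pi.single i 1) = 0 := by
    intro i
    set K := ∑' m : Fin n → ℕ, ‖c m‖ * R ^ (∑ i, m i) with hK
    let e : ℂ → (Fin n → ℂ) := fun t => Pi.single i t
    have he : ∀ t, ‖e t‖ = ‖t‖ := fun t => Pi.norm_single (G := fun _ : Fin n => ℂ) t
    have hest : ∀ t : ℂ, ‖t‖ ≤ R → ‖f (e t) - c (Pi.single i 1) * t‖ ≤ K * (‖t‖ / R) ^ 2 := by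
      intro t ht
      have h1 := hc2 (e t) (by rw [mem_ball_zero_iff, he]; linarith)
      have h2 := h1.update (Pi.single i 1) 0
      have h3 : ∏ j, e t j ^ (Pi.single i 1 : Fin n → ℕ) j = t := by
        rw [Finset.prod_eq_single i]
        · simp [e]
        · intro j _ hj
          simp [hj]
        · simp
      rw [h3, zero_sub, neg_add_eq_sub] at h2
      have h4 := (hsum.hasSum).mul_right ((‖t‖ / R) ^ 2)
      refine h2.norm_le_of_bounded h4 (fun m => ?_)
      by_cases hm : m = Pi.single i 1
      · subst hm
        simp only [Function.update_self, norm_zero]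
        positivity
      rw [Function.update_of_ne hm]
      by_cases hm2 : 2 ≤ ∑ j, m j
      · rw [norm_mul, mul_assoc]
        gcongr
        refine (hl_prod_norm_le _ (he t).le m).trans ?_
        exact hl_pow_two_le hR0 (norm_nonneg _) ht hm2
      · have : c m * ∏ j, e t j ^ m j = 0 := by
          by_cases hall : ∀ j, j ≠ i → m j = 0
          · have hs : ∑ j, m j = m i := by
              rw [Finset.sum_eq_single i]
              · intro j _ hj; exact hall j hj
              · simp
            have hmi : m = Pi.single i (m i) := by
              ext j
              by_cases hj : j = i
              · subst hj; simp
              · simp [hj, hall j hj]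
            rw [hs] at hm2
            have hmi1 : m i ≠ 1 := fun h => hm (by rw [hmi, h])
            have hmi0 : m i = 0 := by omega
            rw [hmi0] at hmi
            rw [hmi, Pi.single_zero, hc0, zero_mul]
          · push Not at hall
            obtain ⟨j, hj, hmj⟩ := hall
            rw [Finset.prod_eq_zero (Finset.mem_univ j), mul_zero]
            simp [e, hj, hmj]
        rw [this, norm_zero]
        positivity
    have hO : (fun t : ℂ => f (e t) - c (Pi.single i 1) * t) =O[nhds 0] fun t => ‖t - 0‖ ^ 2 := by
      refine Asymptotics.IsBigO.of_bound (K / R ^ 2) ?_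
      filter_upwards [closedBall_mem_nhds (0 : ℂ) hR0] with t ht
      refine (hest t (by simpa using ht)).trans_eq ?_
      simp
      ring
    have h0 := hO.hasFDerivAt (𝕜 := ℂ) one_lt_two
    have hed : HasFDerivAt e (ContinuousLinearMap.single ℂ (fun _ : Fin n => ℂ) i) 0 :=
      (ContinuousLinearMap.single ℂ (fun _ : Fin n => ℂ) i).hasFDerivAt
    have hfd : HasFDerivAt f (0 : (Fin n → ℂ) →L[ℂ] ℂ) (e 0) := by
      have : e 0 = 0 := by simp [e]
      rw [this, ← hD]
      exact hdiff.hasFDerivAt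
    have h1 := (hfd.comp (0 : ℂ) hed).sub ((hasFDerivAt_id (𝕜 := ℂ) (0 : ℂ)).const_mul (c (Pi.single i 1)))
    have h2 := h0.unique h1
    have h3 := congrArg (fun A : ℂ →L[ℂ] ℂ => A 1) h2
    simpa using h3
  have hc : ∀ m : Fin n → ℕ, ¬ 2 ≤ ∑ i, m i → c m = 0 := by
    intro m hm
    by_cases h0 : m = 0
    · rw [h0, hc0]
    · obtain ⟨i, hi⟩ := Function.ne_iff.1 h0
      have hi' : m i ≠ 0 := hi
      have hle : m i + ∑ j ∈ Finset.univ.erase i, m j = ∑ j, m j :=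
        Finset.add_sum_erase _ _ (Finset.mem_univ i)
      have hz : ∑ j ∈ Finset.univ.erase i, m j = 0 := by omega
      have : m = Pi.single i 1 := by
        ext j
        by_cases hj : j = i
        · subst hj
          simp
          omega
        · have := (Finset.sum_eq_zero_iff.1 hz) j (by simp [hj])
          simp [hj, this]
      rw [this, hc1']
  refine ⟨R, hR0, fun m => c m.1, hsum.subtype _, fun z hz => ?_⟩
  have h1 := hc2 z (by rw [mem_ball_zero_iff]; linarith)
  have hsupp : Function.support (fun m : Fin n → ℕ => c m * ∏ i, z i ^ m i) ⊆
      {m : Fin n → ℕ | 2 ≤ ∑ i, m i} := by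
    intro m hm
    by_contra hcon
    apply hm
    simp [hc m hcon]
  exact (hasSum_subtype_iff_of_support_subset hsupp).2 h1

/-- Planar-type trees with root label `j`; every node has at least two children. -/
inductive HLTree (n : ℕ) : Fin n → Type
  | leaf (j : Fin n) : HLTree n j
  | node (j : Fin n) (m : HLIdx n) (cs : ∀ s : (Σ i : Fin n, Fin (m.1 i)), HLTree n s.1) :
      HLTree n j

namespace HLTree

variable {n : ℕ}

/-- The multi-index of leaves. -/
def lv : {j : Fin n} → HLTree n j → (Fin n → ℕ)
  | _, leaf j => Pi.single j 1
  | _, node _ _ cs => ∑ s, (cs s).lv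

/-- The number of leaves. -/
def sz {j : Fin n} (T : HLTree n j) : ℕ := ∑ i, T.lv i

/-- Sum over the nodes of a functional of the label and the leaf multi-index. -/
def nsum (φ : Fin n → (Fin n → ℕ) → ℝ) : {j : Fin n} → HLTree n j → ℝ
  | _, leaf _ => 0
  | _, node j _ cs => φ j (∑ s, (cs s).lv) + ∑ s, (cs s).nsum φ

theorem lv_leaf (j : Fin n) : (leaf j).lv = Pi.single j 1 := by rw [lv]
theorem lv_node (j : Fin n) (m : HLIdx n) (cs) : (node j m cs).lv = ∑ s, (cs s).lv := by rw [lv]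
theorem nsum_leaf (φ) (j : Fin n) : (leaf j).nsum φ = 0 := by rw [nsum]
theorem nsum_node (φ) (j : Fin n) (m : HLIdx n) (cs) :
    (node j m cs).nsum φ = φ j (node j m cs).lv + ∑ s, (cs s).nsum φ := by rw [nsum, lv_node]

theorem sz_leaf (j : Fin n) : (leaf j).sz = 1 := by
  simp [sz, lv_leaf]

theorem sz_node (j : Fin n) (m : HLIdx n) (cs) : (node j m cs).sz = ∑ s, (cs s).sz := by
  simp only [sz, lv_node, Finset.sum_apply]
  rw [Finset.sum_comm]

theorem card_children (m : HLIdx n) : 2 ≤ Fintype.card (Σ i : Fin n, Fin (m.1 i)) := by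
  simpa using m.2

theorem sz_pos {j : Fin n} (T : HLTree n j) : 1 ≤ T.sz := by
  induction T with
  | leaf j => rw [sz_leaf]
  | node j m cs ih =>
    rw [sz_node]
    have h1 : ∑ s : (Σ i : Fin n, Fin (m.1 i)), 1 ≤ ∑ s, (cs s).sz :=
      Finset.sum_le_sum (fun s _ => ih s)
    have := card_children m
    simp only [Finset.sum_const, Finset.card_univ, smul_eq_mul, mul_one] at h1
    omega

theorem sz_node_ge (j : Fin n) (m : HLIdx n) (cs) : 2 ≤ (node j m cs).sz := by
  rw [sz_node]
  have h1 : ∑ s : (Σ i : Fin n, Fin (m.1 i)), 1 ≤ ∑ s, (cs s).sz :=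
    Finset.sum_le_sum (fun s _ => sz_pos _)
  have := card_children m
  simp only [Finset.sum_const, Finset.card_univ, smul_eq_mul, mul_one] at h1
  omega

theorem lv_child_le (j : Fin n) (m : HLIdx n) (cs) (s) : (cs s).lv ≤ (node j m cs).lv := by
  rw [lv_node]
  exact Finset.single_le_sum (f := fun s => (cs s).lv) (fun _ _ => zero_le) (Finset.mem_univ s)

theorem sz_child_lt (j : Fin n) (m : HLIdx n) (cs) (s) : (cs s).sz < (node j m cs).sz := by
  rw [sz_node, ← Finset.add_sum_erase _ _ (Finset.mem_univ s)]
  have h1 : ∑ s ∈ Finset.univ.erase s, 1 ≤ ∑ s ∈ Finset.univ.erase s, (cs s).sz :=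
    Finset.sum_le_sum (fun s _ => sz_pos _)
  have := card_children m
  rw [Finset.sum_const, Finset.card_erase_of_mem (Finset.mem_univ s), Finset.card_univ] at h1
  simp only [smul_eq_mul, mul_one] at h1
  omega

theorem nsum_mono {φ ψ : Fin n → (Fin n → ℕ) → ℝ} {j : Fin n} (T : HLTree n j) {N : ℕ}
    (hN : T.sz ≤ N)
    (h : ∀ i m, 2 ≤ ∑ k, m k → ∑ k, m k ≤ N → φ i m ≤ ψ i m) : T.nsum φ ≤ T.nsum ψ := by
  induction T with
  | leaf j => rw [nsum_leaf, nsum_leaf]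
  | node j m cs ih =>
    rw [nsum_node, nsum_node]
    refine add_le_add (h _ _ (sz_node_ge j m cs) hN) (Finset.sum_le_sum fun s _ => ih s ?_)
    exact (sz_child_lt j m cs s).le.trans hN

theorem nsum_add (φ ψ : Fin n → (Fin n → ℕ) → ℝ) {j : Fin n} (T : HLTree n j) :
    T.nsum (fun i m => φ i m + ψ i m) = T.nsum φ + T.nsum ψ := by
  induction T with
  | leaf j => simp [nsum_leaf]
  | node j m cs ih =>
    simp only [nsum_node, ih, Finset.sum_add_distrib]
    ring

theorem nsum_smul (a : ℝ) (φ : Fin n → (Fin n → ℕ) → ℝ) {j : Fin n} (T : HLTree n j) :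
    T.nsum (fun i m => φ i m * a) = T.nsum φ * a := by
  induction T with
  | leaf j => simp [nsum_leaf]
  | node j m cs ih =>
    simp only [nsum_node, ih, ← Finset.sum_mul]
    ring

theorem nsum_zero {j : Fin n} (T : HLTree n j) : T.nsum (fun _ _ => 0) = 0 := by
  induction T with
  | leaf j => simp [nsum_leaf]
  | node j m cs ih => simp [nsum_node, ih]

theorem nsum_sum (K : ℕ) (φ : ℕ → Fin n → (Fin n → ℕ) → ℝ) {j : Fin n} (T : HLTree n j) :
    T.nsum (fun i m => ∑ k ∈ Finset.range K, φ k i m) = ∑ k ∈ Finset.range K, T.nsum (φ k) := by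
  induction K with
  | zero => simpa using nsum_zero T
  | succ K ih =>
    simp only [Finset.sum_range_succ]
    rw [nsum_add, ih]

theorem nsum_one_le {j : Fin n} (T : HLTree n j) : T.nsum (fun _ _ => 1) ≤ T.sz - 1 := by
  induction T with
  | leaf j => simp [nsum_leaf, sz_leaf]
  | node j m cs ih =>
    rw [nsum_node, sz_node]
    have h1 := Finset.sum_le_sum (s := Finset.univ) (fun s _ => ih s)
    rw [Finset.sum_sub_distrib] at h1
    have h2 : (2 : ℝ) ≤ Fintype.card (Σ i : Fin n, Fin (m.1 i)) := by
      exact_mod_cast card_children m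
    simp only [Finset.sum_const, Finset.card_univ, nsmul_eq_mul, mul_one] at h1
    push_cast
    linarith

/-- Elementary trichotomy for the children in the counting lemma. -/
theorem count_aux {ι : Type} [Fintype ι] (c : ι → ℝ) (N : ι → ℝ) (K : ℝ) (hK : 0 ≤ K)
    (hN : ∀ s, 0 ≤ N s)
    (h : ∀ s, c s = 0 ∨ c s * K + K ≤ 2 * N s) :
    (∑ s, c s = 0) ∨ (∃ s, ∑ t, c t = c s ∧ c s * K + K ≤ 2 * N s) ∨
      (∑ s, c s) * K + 2 * K ≤ 2 * ∑ s, N s := by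
  classical
  by_cases h0 : ∀ s, c s = 0
  · left; simp [h0]
  push Not at h0
  obtain ⟨s, hs⟩ := h0
  have hs' := (h s).resolve_left hs
  by_cases h1 : ∀ t, t ≠ s → c t = 0
  · right; left
    refine ⟨s, ?_, hs'⟩
    rw [Finset.sum_eq_single s]
    · intro t _ ht; exact h1 t ht
    · simp
  push Not at h1
  obtain ⟨t, hts, ht⟩ := h1
  have ht' := (h t).resolve_left ht
  right; right
  have hmem : t ∈ Finset.univ.erase s := by simp [hts]
  rw [← Finset.add_sum_erase _ c (Finset.mem_univ s), ← Finset.add_sum_erase _ c hmem,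
    ← Finset.add_sum_erase _ N (Finset.mem_univ s), ← Finset.add_sum_erase _ N hmem]
  have hrest : (∑ x ∈ (Finset.univ.erase s).erase t, c x) * K ≤
      2 * ∑ x ∈ (Finset.univ.erase s).erase t, N x := by
    rw [Finset.sum_mul, Finset.mul_sum]
    apply Finset.sum_le_sum
    intro x _
    rcases h x with hx | hx
    · rw [hx, zero_mul]; linarith [hN x]
    · linarith
  linarith

open Classical in
/-- The counting lemma of Bruno. -/
theorem count_le (bad : Fin n → (Fin n → ℕ) → Prop) (K : ℝ) (hK : 0 ≤ K)
    (b1 : ∀ j m, bad j m → K ≤ ((∑ i, m i : ℕ) : ℝ))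
    (b2 : ∀ j m j' m', bad j m → bad j' m' → m' ≤ m → ∑ i, m' i < ∑ i, m i →
      ((∑ i, m' i : ℕ) : ℝ) + K ≤ ((∑ i, m i : ℕ) : ℝ)) {j : Fin n} (T : HLTree n j) :
    (T.nsum (fun i m => if bad i m then 1 else 0) = 0 ∨
      T.nsum (fun i m => if bad i m then 1 else 0) * K + K ≤ 2 * (T.sz : ℝ)) ∧
    (∀ j₀ m₀, bad j₀ m₀ → T.lv ≤ m₀ → T.sz < ∑ i, m₀ i →
      T.nsum (fun i m => if bad i m then 1 else 0) * K + 2 * K ≤ 2 * ((∑ i, m₀ i : ℕ) : ℝ)) := by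
  induction T with
  | leaf j =>
    refine ⟨Or.inl (nsum_leaf _ _), fun j₀ m₀ hb _ _ => ?_⟩
    rw [nsum_leaf]
    linarith [b1 _ _ hb]
  | node j m cs ih =>
    have htri := count_aux (fun s => (cs s).nsum (fun i m => if bad i m then 1 else 0))
      (fun s => ((cs s).sz : ℝ)) K hK (fun s => by positivity) (fun s => (ih s).1)
    have hsz : ∑ s, ((cs s).sz : ℝ) = ((node j m cs).sz : ℝ) := by
      rw [sz_node]; push_cast; rfl
    rw [hsz] at htri
    have hi : (node j m cs).nsum (fun i m => if bad i m then (1 : ℝ) else 0) = 0 ∨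
      (node j m cs).nsum (fun i m => if bad i m then 1 else 0) * K + K ≤
        2 * ((node j m cs).sz : ℝ) := by
      rw [nsum_node]
      by_cases hb : bad j (node j m cs).lv
      · right
        rw [if_pos hb]
        have hKN : K ≤ ((node j m cs).sz : ℝ) := b1 _ _ hb
        rcases htri with h | ⟨s, h, h'⟩ | h
        · rw [h]; linarith
        · have := (ih s).2 j _ hb (lv_child_le j m cs s) (sz_child_lt j m cs s)
          rw [h]
          change _ ≤ 2 * ((node j m cs).sz : ℝ) at this
          linarith
        · linarith
      · rw [if_neg hb, zero_add]
        rcases htri with h | ⟨s, h, h'⟩ | h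
        · left; exact h
        · right
          have : ((cs s).sz : ℝ) ≤ (node j m cs).sz := by exact_mod_cast (sz_child_lt j m cs s).le
          rw [h]
          linarith
        · right; linarith
    refine ⟨hi, fun j₀ m₀ hb₀ hle hlt => ?_⟩
    have hKm := b1 _ _ hb₀
    by_cases hb : bad j (node j m cs).lv
    · have h1 := b2 _ _ _ _ hb₀ hb hle hlt
      change ((node j m cs).sz : ℝ) + K ≤ _ at h1
      rcases hi with h | h
      · rw [h]; linarith
      · linarith
    · rw [nsum_node, if_neg hb, zero_add]
      have hlt' : ((node j m cs).sz : ℝ) < ((∑ i, m₀ i : ℕ) : ℝ) := by exact_mod_cast hlt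
      rcases htri with h | ⟨s, h, h'⟩ | h
      · rw [h]; linarith
      · rw [h]
        exact (ih s).2 j₀ m₀ hb₀ ((lv_child_le j m cs s).trans hle)
          ((sz_child_lt j m cs s).trans hlt)
      · linarith

end HLTree

theorem hl_abel (l : ℕ → ℝ) (hl : Monotone l) (h0 : ∀ k, 0 ≤ l k)
    (hs : Summable (fun k : ℕ => ((1 : ℝ) / (k + 1) - 1 / (k + 2)) * l k)) (n : ℕ) :
    ∑ k ∈ Finset.range n, (l (k + 1) - l k) / (k + 2) ≤
      3 * ∑' k : ℕ, ((1 : ℝ) / (k + 1) - 1 / (k + 2)) * l k := by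
  have hc : ∀ k : ℕ, (0 : ℝ) ≤ (1 : ℝ) / (k + 1) - 1 / (k + 2) := by
    intro k
    rw [sub_nonneg]
    apply one_div_le_one_div_of_le <;> [positivity; linarith]
  have hb : ∀ k : ℕ, 0 ≤ ((1 : ℝ) / (k + 1) - 1 / (k + 2)) * l k := fun k => mul_nonneg (hc k) (h0 k)
  have h1 : ∀ n : ℕ, ∑ k ∈ Finset.range n, (l (k + 1) - l k) / (k + 2) ≤
      l n / (n + 1) + ∑ k ∈ Finset.range n, ((1 : ℝ) / (k + 1) - 1 / (k + 2)) * l k := by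
    intro n
    induction n with
    | zero => simpa using h0 0
    | succ n ih =>
      rw [Finset.sum_range_succ, Finset.sum_range_succ]
      have : l (n + 1) / ((n + 1 : ℕ) + 1 : ℝ) = l (n + 1) / (n + 2) := by
        push_cast; ring_nf
      rw [this, sub_div]
      have h2 : ((1 : ℝ) / (n + 1) - 1 / (n + 2)) * l n = l n / (n + 1) - l n / (n + 2) := by ring
      rw [h2]
      linarith
  have h2 : ∀ p : ℕ, l n * (1 / (n + 1) - 1 / (n + p + 1)) ≤
      ∑ k ∈ Finset.range (n + p), ((1 : ℝ) / (k + 1) - 1 / (k + 2)) * l k := by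
    intro p
    induction p with
    | zero =>
      simp only [Nat.cast_zero, add_zero, sub_self, mul_zero]
      exact Finset.sum_nonneg (fun k _ => hb k)
    | succ p ih =>
      rw [← add_assoc, Finset.sum_range_succ]
      have h3 : ((1 : ℝ) / ((n + p : ℕ) + 1) - 1 / ((n + p : ℕ) + 2)) * l n ≤
          ((1 : ℝ) / ((n + p : ℕ) + 1) - 1 / ((n + p : ℕ) + 2)) * l (n + p) :=
        mul_le_mul_of_nonneg_left (hl (Nat.le_add_right _ _)) (hc _)
      have h4 : l n * ((1 : ℝ) / (n + 1) - 1 / (n + (p + 1 : ℕ) + 1)) =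
          l n * (1 / (n + 1) - 1 / (n + p + 1)) +
          ((1 : ℝ) / ((n + p : ℕ) + 1) - 1 / ((n + p : ℕ) + 2)) * l n := by
        push_cast
        rw [show (n : ℝ) + (p + 1) + 1 = n + p + 2 by ring]
        ring
      rw [h4]
      linarith
  have h3 := h2 (n + 1)
  have h4 : l n * ((1 : ℝ) / (n + 1) - 1 / (n + (n + 1 : ℕ) + 1)) = l n / (n + 1) / 2 := by
    push_cast
    have : (n : ℝ) + 1 ≠ 0 := by positivity
    rw [show (n : ℝ) + (n + 1) + 1 = 2 * (n + 1) by ring]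
    field_simp
    ring
  rw [h4] at h3
  have h5 := hs.sum_le_tsum (Finset.range (n + (n + 1))) (fun k _ => hb k)
  have h6 := hs.sum_le_tsum (Finset.range n) (fun k _ => hb k)
  linarith [h1 n]

open Classical in
theorem hl_telescope (l : ℕ → ℝ) (hl : Monotone l) (c x : ℝ) (n : ℕ) (hx : x ≤ c + l n) :
    x ≤ c + l 0 + ∑ k ∈ Finset.range n, (if c + l k < x then 1 else 0) * (l (k + 1) - l k) := by
  induction n with
  | zero => simpa using hx
  | succ n ih =>
    by_cases h : x ≤ c + l n
    · rw [Finset.sum_range_succ]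
      have : 0 ≤ (if c + l n < x then (1 : ℝ) else 0) * (l (n + 1) - l n) := by
        apply mul_nonneg
        · split_ifs <;> norm_num
        · linarith [hl (Nat.le_succ n)]
      linarith [ih h]
    · push Not at h
      have : ∑ k ∈ Finset.range (n + 1), (if c + l k < x then (1 : ℝ) else 0) * (l (k + 1) - l k) =
          ∑ k ∈ Finset.range (n + 1), (l (k + 1) - l k) := by
        apply Finset.sum_congr rfl
        intro k hk
        rw [if_pos, one_mul]
        have := hl (Nat.lt_succ_iff.1 (Finset.mem_range.1 hk))
        linarith
      rw [this, Finset.sum_range_sub]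
      linarith

theorem hl_exp_sub (x : ℂ) :
    min 1 (infDist x intsC) / 2 ≤ ‖Complex.exp (2 * Real.pi * Complex.I * x) - 1‖ := by
  set u := Complex.exp (2 * Real.pi * Complex.I * x) with hu
  by_cases h : ‖u - 1‖ ≤ 1 / 2
  · have hlog := Complex.norm_log_one_add_half_le_self h
    rw [add_sub_cancel] at hlog
    have hu0 : u ≠ 0 := Complex.exp_ne_zero _
    have he : Complex.exp (2 * Real.pi * Complex.I * x) = Complex.exp (Complex.log u) := by
      rw [Complex.exp_log hu0]
    obtain ⟨n, hn⟩ := Complex.exp_eq_exp_iff_exists_int.1 he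
    have hpi : (2 * Real.pi * Complex.I : ℂ) ≠ 0 := Complex.two_pi_I_ne_zero
    have hx : (2 * Real.pi * Complex.I : ℂ) * (x - n) = Complex.log u := by
      rw [mul_sub, hn]; ring
    have hnorm : 2 * Real.pi * ‖x - n‖ = ‖Complex.log u‖ := by
      rw [← hx, norm_mul]
      simp [abs_of_pos Real.pi_pos]
    have hd : infDist x intsC ≤ ‖x - n‖ := by
      rw [← dist_eq_norm]
      exact infDist_le_dist_of_mem ⟨n, rfl⟩
    have h3 := Real.pi_gt_three
    have : min 1 (infDist x intsC) ≤ ‖x - n‖ := (min_le_right _ _).trans hd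
    nlinarith [norm_nonneg (x - n), norm_nonneg (u - 1)]
  · push Not at h
    linarith [min_le_left 1 (infDist x intsC)]

section
variable {ν : ℕ} (lam : Fin ν → ℂ)

/-- The small divisor distance. -/
def hlD (j : Fin ν) (m : Fin ν → ℕ) : ℝ := infDist ((∑ i, (m i : ℂ) * lam i) - lam j) intsC

theorem hl_om_bdd (k : ℕ) : BddBelow ({1} ∪ {x : ℝ | ∃ j : Fin ν, ∃ m : Fin ν → ℕ,
    2 ≤ ∑ i, m i ∧ ∑ i, m i ≤ k + 1 ∧
    x = Metric.infDist ((∑ i, (m i : ℂ) * lam i) - lam j) intsC}) := by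
  refine ⟨0, ?_⟩
  rintro x (rfl | ⟨j, m, _, _, rfl⟩)
  · exact zero_le_one
  · exact infDist_nonneg

theorem hl_om_le_one (k : ℕ) : omegaD lam k ≤ 1 :=
  csInf_le (hl_om_bdd lam k) (Or.inl rfl)

theorem hl_om_le (k : ℕ) (j : Fin ν) (m : Fin ν → ℕ) (h2 : 2 ≤ ∑ i, m i)
    (hk : ∑ i, m i ≤ k + 1) : omegaD lam k ≤ hlD lam j m :=
  csInf_le (hl_om_bdd lam k) (Or.inr ⟨j, m, h2, hk, rfl⟩)

theorem hl_om_anti : Antitone (omegaD lam) := by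
  intro k k' hkk
  apply csInf_le_csInf (hl_om_bdd lam k') ⟨1, Or.inl rfl⟩
  rintro x (rfl | ⟨j, m, h1, h2, rfl⟩)
  · exact Or.inl rfl
  · exact Or.inr ⟨j, m, h1, by omega, rfl⟩

theorem hl_om_pos (hd : ∀ j m, 2 ≤ ∑ i, m i → 0 < hlD lam j m) (k : ℕ) : 0 < omegaD lam k := by
  have hfin : ({1} ∪ {x : ℝ | ∃ j : Fin ν, ∃ m : Fin ν → ℕ,
    2 ≤ ∑ i, m i ∧ ∑ i, m i ≤ k + 1 ∧
    x = Metric.infDist ((∑ i, (m i : ℂ) * lam i) - lam j) intsC}).Finite := by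
    apply (Set.finite_singleton _).union
    have hf : (Set.univ ×ˢ Set.Iic (fun _ => k + 1) : Set (Fin ν × (Fin ν → ℕ))).Finite :=
      Set.finite_univ.prod (Set.finite_Iic _)
    refine (hf.image (fun p => hlD lam p.1 p.2)).subset ?_
    rintro x ⟨j, m, h1, h2, rfl⟩
    refine ⟨(j, m), ⟨trivial, fun i => ?_⟩, rfl⟩
    exact (Finset.single_le_sum (f := m) (fun _ _ => Nat.zero_le _) (Finset.mem_univ i)).trans h2
  have hmem := Set.Nonempty.csInf_mem (Set.Nonempty.inl (Set.singleton_nonempty (1 : ℝ))) hfin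
  change omegaD lam k ∈ _ at hmem
  rcases hmem with h | ⟨j, m, h1, h2, h3⟩
  · have h' : omegaD lam k = 1 := h
    rw [h']; exact one_pos
  · rw [h3]; exact hd j m h1

theorem hlD_sub (j j' : Fin ν) (m m' : Fin ν → ℕ) (hm : m' ≤ m) :
    hlD lam j (m - m' + Pi.single j' 1) ≤ hlD lam j m + hlD lam j' m' := by
  have hne : intsC.Nonempty := ⟨_, 0, rfl⟩
  have heq : (∑ i, ((m - m' + Pi.single j' 1 : Fin ν → ℕ) i : ℂ) * lam i) - lam j =
      ((∑ i, (m i : ℂ) * lam i) - lam j) - ((∑ i, (m' i : ℂ) * lam i) - lam j') := by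
    have : ∀ i, ((m - m' + Pi.single j' 1 : Fin ν → ℕ) i : ℂ) * lam i =
        (m i : ℂ) * lam i - (m' i : ℂ) * lam i + (Pi.single j' (1 : ℂ) : Fin ν → ℂ) i * lam i := by
      intro i
      rw [Pi.add_apply, Pi.sub_apply, Nat.cast_add, Nat.cast_sub (hm i)]
      have : (((Pi.single j' 1 : Fin ν → ℕ) i : ℕ) : ℂ) = (Pi.single j' (1 : ℂ) : Fin ν → ℂ) i := by
        by_cases h : i = j'
        · subst h; simp
        · simp [h]
      rw [this]; ring
    simp only [this, Finset.sum_add_distrib, Finset.sum_sub_distrib]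
    have h1 : ∑ i, (Pi.single j' (1 : ℂ) : Fin ν → ℂ) i * lam i = lam j' := by
      rw [Finset.sum_eq_single j'] <;> simp +contextual
    rw [h1]; ring
  apply le_of_forall_pos_lt_add
  intro ε hε
  obtain ⟨_, ⟨a, rfl⟩, ha⟩ := (infDist_lt_iff hne).1
    (show hlD lam j m < hlD lam j m + ε / 2 by linarith)
  obtain ⟨_, ⟨b, rfl⟩, hb⟩ := (infDist_lt_iff hne).1
    (show hlD lam j' m' < hlD lam j' m' + ε / 2 by linarith)
  have h1 : hlD lam j (m - m' + Pi.single j' 1) ≤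
      dist ((∑ i, ((m - m' + Pi.single j' 1 : Fin ν → ℕ) i : ℂ) * lam i) - lam j) ((a - b : ℤ) : ℂ) :=
    infDist_le_dist_of_mem ⟨a - b, rfl⟩
  rw [heq, Int.cast_sub] at h1
  have h2 := dist_sub_sub_le ((∑ i, (m i : ℂ) * lam i) - lam j) ((∑ i, (m' i : ℂ) * lam i) - lam j')
    (a : ℂ) (b : ℂ)
  linarith

/-- Logarithmic size of the small divisor. -/
def hlX (j : Fin ν) (m : Fin ν → ℕ) : ℝ := Real.log (1 / min 1 (hlD lam j m))

theorem hl_bruno_aux (hd : ∀ j m, 2 ≤ ∑ i, m i → 0 < hlD lam j m)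
    (hB : Summable (brunoTermD lam)) :
    ∃ C : ℝ, 0 ≤ C ∧ ∀ (j : Fin ν) (T : HLTree ν j), T.nsum (hlX lam) ≤ C * T.sz := by
  classical
  set l : ℕ → ℝ := fun k => Real.log (1 / omegaD lam (k + 1)) with hldef
  have hpos := hl_om_pos lam hd
  have hl : Monotone l := by
    intro k k' hk
    apply Real.log_le_log (by have := hpos (k + 1); positivity)
    exact one_div_le_one_div_of_le (hpos _) (hl_om_anti lam (by omega))
  have hl0 : ∀ k, 0 ≤ l k := fun k => Real.log_nonneg (by
    rw [le_div_iff₀ (hpos _), one_mul]; exact hl_om_le_one lam _)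
  have hab := hl_abel l hl hl0 hB
  set S := ∑' k : ℕ, ((1 : ℝ) / (k + 1) - 1 / (k + 2)) * l k with hS
  have hS0 : 0 ≤ S := by have := hab 0; simp at this; linarith
  have hlog2 : 0 ≤ Real.log 2 := Real.log_nonneg (by norm_num)
  refine ⟨Real.log 2 + l 0 + 6 * S, by linarith [hl0 0], fun j T => ?_⟩
  obtain ⟨bad, hbd⟩ : ∃ bad : ℕ → Fin ν → (Fin ν → ℕ) → Prop, ∀ k j m, bad k j m ↔
    2 ≤ ∑ i, m i ∧ Real.log 2 + l k < hlX lam j m := ⟨_, fun _ _ _ => Iff.rfl⟩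
  have hbad : ∀ k j m, bad k j m → hlD lam j m < omegaD lam (k + 1) / 2 := by
    intro k j m hb
    obtain ⟨h2, h⟩ := (hbd k j m).1 hb
    have hp := hpos (k + 1)
    have hmp : 0 < min 1 (hlD lam j m) := lt_min one_pos (hd j m h2)
    rw [hldef, ← Real.log_mul (by norm_num) (by positivity), hlX] at h
    have h' := (Real.log_lt_log_iff (by positivity) (by positivity)).1 h
    rw [mul_one_div, div_lt_div_iff₀ hp hmp] at h'
    have h1 := hl_om_le_one lam (k + 1)
    rcases le_total 1 (hlD lam j m) with h3 | h3
    · rw [min_eq_left h3] at h'; linarith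
    · rw [min_eq_right h3] at h'; linarith
  have hcount : ∀ k : ℕ, T.nsum (fun i m => if bad k i m then 1 else 0) * ((k : ℝ) + 2) ≤
      2 * T.sz := by
    intro k
    have := (HLTree.count_le (bad k) ((k : ℝ) + 2) (by positivity) (by
      intro j m hb
      have h := hbad k j m hb
      by_contra hcon
      push Not at hcon
      have hcon' : ∑ i, m i < k + 2 := by exact_mod_cast hcon
      have h3 := hl_om_le lam (k + 1) j m ((hbd k j m).1 hb).1 (by omega)
      linarith [hpos (k + 1)]) (by
      intro j m j' m' hb hb' hle hlt
      have h := hbad k j m hb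
      have h' := hbad k j' m' hb'
      have h'' := hlD_sub lam j j' m m' hle
      have hsum : ∑ i, (m - m' + Pi.single j' 1 : Fin ν → ℕ) i + ∑ i, m' i = ∑ i, m i + 1 := by
        rw [← Finset.sum_add_distrib]
        have : ∀ i, (m - m' + Pi.single j' 1 : Fin ν → ℕ) i + m' i =
            m i + (Pi.single j' 1 : Fin ν → ℕ) i := by
          intro i
          have : m' i ≤ m i := hle i
          simp only [Pi.add_apply, Pi.sub_apply]
          omega
        simp only [this, Finset.sum_add_distrib]
        simp
      by_contra hcon
      push Not at hcon
      have hcon' : ∑ i, m i < ∑ i, m' i + (k + 2) := by exact_mod_cast hcon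
      have h3 := hl_om_le lam (k + 1) j (m - m' + Pi.single j' 1) (by omega) (by omega)
      linarith) T).1
    rcases this with h | h
    · rw [h]; simp
    · linarith [show (0 : ℝ) ≤ k by positivity]
  have h1 : T.nsum (hlX lam) ≤ T.nsum (fun j m => 1 * (Real.log 2 + l 0) +
      ∑ k ∈ Finset.range T.sz, (if bad k j m then 1 else 0) * (l (k + 1) - l k)) := by
    apply T.nsum_mono le_rfl
    intro i m h2 hN
    have hx : hlX lam i m ≤ Real.log 2 + l T.sz := by
      have h3 := hl_om_le lam (T.sz + 1) i m h2 (by omega)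
      have h4 : hlX lam i m ≤ l T.sz := by
        apply Real.log_le_log
        · have : 0 < min 1 (hlD lam i m) := lt_min one_pos (hd i m h2)
          positivity
        · exact one_div_le_one_div_of_le (hpos _) (le_min (hl_om_le_one lam _) h3)
      linarith
    have h3 := hl_telescope l hl (Real.log 2) (hlX lam i m) T.sz hx
    rw [one_mul]
    refine h3.trans_eq ?_
    congr 1
    apply Finset.sum_congr rfl
    intro k _
    simp [hbd, h2]
  rw [HLTree.nsum_add, HLTree.nsum_smul (Real.log 2 + l 0) (fun _ _ => 1),
    HLTree.nsum_sum T.sz (fun k j m => (if bad k j m then 1 else 0) * (l (k + 1) - l k))] at h1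
  have h2 : ∑ k ∈ Finset.range T.sz,
      T.nsum (fun j m => (if bad k j m then 1 else 0) * (l (k + 1) - l k)) ≤
      ∑ k ∈ Finset.range T.sz, 2 * (T.sz : ℝ) * ((l (k + 1) - l k) / (k + 2)) := by
    apply Finset.sum_le_sum
    intro k _
    rw [HLTree.nsum_smul (l (k + 1) - l k) (fun j m => if bad k j m then 1 else 0)]
    have hk : (0 : ℝ) < (k : ℝ) + 2 := by positivity
    have h3 := hcount k
    have h4 : 0 ≤ l (k + 1) - l k := by linarith [hl (Nat.le_succ k)]
    rw [← le_div_iff₀ hk] at h3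
    refine (mul_le_mul_of_nonneg_right h3 h4).trans_eq (by ring)
  rw [← Finset.mul_sum] at h2
  have h3 := mul_le_mul_of_nonneg_left (hab T.sz) (show (0 : ℝ) ≤ 2 * T.sz by positivity)
  have h4 := mul_le_mul_of_nonneg_right T.nsum_one_le (show 0 ≤ Real.log 2 + l 0 by linarith [hl0 0])
  nlinarith [hl0 0]

/-- The small divisor. -/
def hlE (j : Fin ν) (m : Fin ν → ℕ) : ℂ :=
  Complex.exp (2 * Real.pi * Complex.I * ((∑ i, (m i : ℂ) * lam i) - lam j)) - 1

theorem hlE_eq (q : Fin ν → ℂ) (hq : ∀ j, q j = Complex.exp (2 * Real.pi * Complex.I * lam j))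
    (j : Fin ν) (m : Fin ν → ℕ) : hlE lam j m = (∏ i, q i ^ m i) / q j - 1 := by
  rw [hlE, mul_sub, Complex.exp_sub, ← hq, Finset.mul_sum, Complex.exp_sum]
  congr 2
  apply Finset.prod_congr rfl
  intro i _
  rw [hq, ← Complex.exp_nat_mul]
  congr 1
  ring

theorem hlE_ne (q : Fin ν → ℂ) (hq : ∀ j, q j = Complex.exp (2 * Real.pi * Complex.I * lam j))
    (hres : NonResonantQ q) (j : Fin ν) (m : Fin ν → ℕ) (h2 : 2 ≤ ∑ i, m i) :
    hlE lam j m ≠ 0 := by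
  rw [hlE_eq lam q hq, sub_ne_zero]
  intro h
  have hj : q j ≠ 0 := by rw [hq]; exact Complex.exp_ne_zero _
  rw [div_eq_one_iff_eq hj] at h
  exact hres j m h2 h.symm

theorem hlD_pos (q : Fin ν → ℂ) (hq : ∀ j, q j = Complex.exp (2 * Real.pi * Complex.I * lam j))
    (hres : NonResonantQ q) (j : Fin ν) (m : Fin ν → ℕ) (h2 : 2 ≤ ∑ i, m i) :
    0 < hlD lam j m := by
  have hcl : IsClosed intsC := Complex.isClosed_range_intCast
  refine (hcl.notMem_iff_infDist_pos ⟨_, 0, rfl⟩).1 ?_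
  rintro ⟨n, hn⟩
  apply hlE_ne lam q hq hres j m h2
  rw [hlE, ← hn, sub_eq_zero]
  exact Complex.exp_eq_one_iff.2 ⟨n, by ring⟩

theorem hl_bruno (q : Fin ν → ℂ) (hq : ∀ j, q j = Complex.exp (2 * Real.pi * Complex.I * lam j))
    (hres : NonResonantQ q) (hB : Summable (brunoTermD lam)) :
    ∃ C : ℝ, 0 ≤ C ∧ ∀ (j : Fin ν) (T : HLTree ν j),
      T.nsum (fun j m => Real.log ‖hlE lam j m‖⁻¹) ≤ C * T.sz := by
  have hd := hlD_pos lam q hq hres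
  obtain ⟨C, hC, h⟩ := hl_bruno_aux lam hd hB
  have hlog2 : 0 ≤ Real.log 2 := Real.log_nonneg (by norm_num)
  refine ⟨Real.log 2 + C, by linarith, fun j T => ?_⟩
  have h1 : T.nsum (fun j m => Real.log ‖hlE lam j m‖⁻¹) ≤
      T.nsum (fun j m => 1 * Real.log 2 + hlX lam j m) := by
    apply T.nsum_mono le_rfl
    intro i m h2 _
    have hmp : 0 < min 1 (hlD lam i m) := lt_min one_pos (hd i m h2)
    have he := hl_exp_sub ((∑ i, (m i : ℂ) * lam i) - lam i)
    change min 1 (hlD lam i m) / 2 ≤ ‖hlE lam i m‖ at he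
    rw [one_mul, hlX, ← Real.log_mul (by norm_num) (by positivity)]
    apply Real.log_le_log
    · have : 0 < ‖hlE lam i m‖ := lt_of_lt_of_le (by positivity) he
      positivity
    · refine (inv_anti₀ (by positivity) he).trans_eq ?_
      rw [inv_div, mul_one_div]
  rw [HLTree.nsum_add, HLTree.nsum_smul (Real.log 2) (fun _ _ => 1)] at h1
  have h4 := mul_le_mul_of_nonneg_right T.nsum_one_le hlog2
  nlinarith [h j T]

end

namespace HLTree

variable {n : ℕ}

/-- Decomposition of trees at the root. -/
def rootEquiv (j : Fin n) :
    HLTree n j ≃ Unit ⊕ (Σ m : HLIdx n, ∀ s : (Σ i : Fin n, Fin (m.1 i)), HLTree n s.1) where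
  toFun T := match T with
    | leaf _ => Sum.inl ()
    | node _ m cs => Sum.inr ⟨m, cs⟩
  invFun p := match p with
    | Sum.inl _ => leaf j
    | Sum.inr p => node j p.1 p.2
  left_inv T := by cases T <;> rfl
  right_inv p := by rcases p with _ | p <;> rfl

theorem hasSum_root {E : Type} [NormedAddCommGroup E] {j : Fin n} {f : HLTree n j → E} {S : E}
    (h : HasSum (fun p : (Σ m : HLIdx n, ∀ s : (Σ i : Fin n, Fin (m.1 i)), HLTree n s.1) =>
      f (node j p.1 p.2)) S) : HasSum f (f (leaf j) + S) := by
  rw [← (rootEquiv j).symm.hasSum_iff]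
  refine HasSum.sum ?_ ?_
  · exact hasSum_unique (fun _ : Unit => f (leaf j))
  · exact h

theorem summable_root {E : Type} [NormedAddCommGroup E] [CompleteSpace E] {j : Fin n}
    {f : HLTree n j → E} (h : Summable f) :
    Summable (fun p : (Σ m : HLIdx n, ∀ s : (Σ i : Fin n, Fin (m.1 i)), HLTree n s.1) =>
      f (node j p.1 p.2)) := by
  refine h.comp_injective (i := fun p : (Σ m : HLIdx n,
    ∀ s : (Σ i : Fin n, Fin (m.1 i)), HLTree n s.1) => node j p.1 p.2) ?_
  rintro ⟨m, cs⟩ ⟨m', cs'⟩ h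
  simp only [node.injEq] at h
  obtain ⟨rfl, h⟩ := h
  rw [eq_of_heq h]

/-- Majorant weights. -/
def wt (A : Fin n → HLIdx n → ℝ) (ρ : ℝ) : {j : Fin n} → HLTree n j → ℝ
  | _, leaf _ => ρ
  | _, node j m cs => A j m * ∏ s, (cs s).wt A ρ

/-- Truncated majorant weights. -/
def wtk (A : Fin n → HLIdx n → ℝ) (ρ : ℝ) : ℕ → {j : Fin n} → HLTree n j → ℝ
  | _, _, leaf _ => ρ
  | 0, _, node _ _ _ => 0
  | k + 1, _, node j m cs => A j m * ∏ s, wtk A ρ k (cs s)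

variable (A : Fin n → HLIdx n → ℝ) (ρ : ℝ)

theorem wt_leaf (j : Fin n) : (leaf j).wt A ρ = ρ := by rw [wt]
theorem wt_node (j : Fin n) (m : HLIdx n) (cs) :
    (node j m cs).wt A ρ = A j m * ∏ s, (cs s).wt A ρ := by rw [wt]
theorem wtk_leaf (k : ℕ) (j : Fin n) : wtk A ρ k (leaf j) = ρ := by
  cases k <;> rw [wtk]
theorem wtk_zero (j : Fin n) (m : HLIdx n) (cs) : wtk A ρ 0 (node j m cs) = 0 := by rw [wtk]
theorem wtk_succ (k : ℕ) (j : Fin n) (m : HLIdx n) (cs) :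
    wtk A ρ (k + 1) (node j m cs) = A j m * ∏ s, wtk A ρ k (cs s) := by rw [wtk]

variable {A ρ}

theorem wt_nonneg (hA : ∀ j m, 0 ≤ A j m) (hρ : 0 ≤ ρ) {j : Fin n} (T : HLTree n j) :
    0 ≤ T.wt A ρ := by
  induction T with
  | leaf j => rwa [wt_leaf]
  | node j m cs ih =>
    rw [wt_node]
    exact mul_nonneg (hA _ _) (Finset.prod_nonneg fun s _ => ih s)

theorem wtk_nonneg (hA : ∀ j m, 0 ≤ A j m) (hρ : 0 ≤ ρ) {j : Fin n} (T : HLTree n j) (k : ℕ) :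
    0 ≤ wtk A ρ k T := by
  induction T generalizing k with
  | leaf j => rwa [wtk_leaf]
  | node j m cs ih =>
    cases k with
    | zero => rw [wtk_zero]
    | succ k =>
      rw [wtk_succ]
      exact mul_nonneg (hA _ _) (Finset.prod_nonneg fun s _ => ih s k)

theorem wtk_eventually {j : Fin n} (T : HLTree n j) :
    ∀ᶠ k in Filter.atTop, wtk A ρ k T = T.wt A ρ := by
  induction T with
  | leaf j => exact Filter.Eventually.of_forall fun k => by rw [wtk_leaf, wt_leaf]
  | node j m cs ih =>
    have h : ∀ᶠ k in Filter.atTop, ∀ s, wtk A ρ k (cs s) = (cs s).wt A ρ :=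
      Filter.eventually_all.2 ih
    rw [Filter.eventually_atTop] at h ⊢
    obtain ⟨K, hK⟩ := h
    refine ⟨K + 1, fun k hk => ?_⟩
    obtain ⟨l, rfl⟩ : ∃ l, k = l + 1 := ⟨k - 1, by omega⟩
    rw [wtk_succ, wt_node]
    congr 1
    exact Finset.prod_congr rfl fun s _ => hK l (by omega) s

theorem wtk_sum (hA : ∀ j m, 0 ≤ A j m) (hρ : 0 ≤ ρ) {R C : ℝ} (hR : 0 < R)
    (hAs : ∀ j, Summable (fun m : HLIdx n => A j m * R ^ (∑ i, m.1 i)))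
    (hC : ∀ j, ∑' m : HLIdx n, A j m * R ^ (∑ i, m.1 i) ≤ C)
    (h2 : 2 * ρ ≤ R) (h3 : C * (2 * ρ / R) ^ 2 ≤ ρ) (k : ℕ) (j : Fin n) :
    Summable (fun T : HLTree n j => wtk A ρ k T) ∧ ∑' T : HLTree n j, wtk A ρ k T ≤ 2 * ρ := by
  induction k generalizing j with
  | zero =>
    have h := hasSum_root (j := j) (f := fun T => wtk A ρ 0 T) (S := 0) (by
      simp only [wtk_zero]; exact hasSum_zero)
    rw [wtk_leaf] at h
    refine ⟨h.summable, ?_⟩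
    rw [h.tsum_eq]; linarith
  | succ k ih =>
    have hs : ∀ m : HLIdx n, HasSum
        (fun cs : (∀ s : (Σ i : Fin n, Fin (m.1 i)), HLTree n s.1) => A j m * ∏ s, wtk A ρ k (cs s))
        (A j m * ∏ s : (Σ i : Fin n, Fin (m.1 i)), ∑' T : HLTree n s.1, wtk A ρ k T) := by
      intro m
      refine (hl_pi_hasSum (𝕜 := ℝ) (fun s : (Σ i : Fin n, Fin (m.1 i)) =>
        fun T : HLTree n s.1 => wtk A ρ k T) (fun s => ?_)).mul_left _
      simpa only [Real.norm_eq_abs, abs_of_nonneg (wtk_nonneg hA hρ _ k)] using (ih s.1).1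
    have hle : ∀ m : HLIdx n,
        A j m * ∏ s : (Σ i : Fin n, Fin (m.1 i)), ∑' T : HLTree n s.1, wtk A ρ k T ≤
        A j m * R ^ (∑ i, m.1 i) * (2 * ρ / R) ^ 2 := by
      intro m
      rw [mul_assoc]
      refine mul_le_mul_of_nonneg_left ?_ (hA _ _)
      refine le_trans ?_ (hl_pow_two_le hR (by linarith) h2 m.2)
      have : ∏ s : (Σ i : Fin n, Fin (m.1 i)), ∑' T : HLTree n s.1, wtk A ρ k T ≤
          ∏ s : (Σ i : Fin n, Fin (m.1 i)), 2 * ρ :=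
        Finset.prod_le_prod (fun s _ => tsum_nonneg fun T => wtk_nonneg hA hρ _ k)
          (fun s _ => (ih s.1).2)
      refine this.trans_eq ?_
      simp
    have hnn : ∀ m : HLIdx n,
        0 ≤ A j m * ∏ s : (Σ i : Fin n, Fin (m.1 i)), ∑' T : HLTree n s.1, wtk A ρ k T :=
      fun m => mul_nonneg (hA _ _)
        (Finset.prod_nonneg fun s _ => tsum_nonneg fun T => wtk_nonneg hA hρ _ k)
    have hmaj := (hAs j).mul_right ((2 * ρ / R) ^ 2)
    have hsm : Summable (fun m : HLIdx n =>
        A j m * ∏ s : (Σ i : Fin n, Fin (m.1 i)), ∑' T : HLTree n s.1, wtk A ρ k T) :=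
      Summable.of_nonneg_of_le hnn hle hmaj
    have hsig : Summable (fun p : (Σ m : HLIdx n, ∀ s : (Σ i : Fin n, Fin (m.1 i)), HLTree n s.1) =>
        wtk A ρ (k + 1) (node j p.1 p.2)) := by
      rw [summable_sigma_of_nonneg (fun p => wtk_nonneg hA hρ _ _)]
      simp only [wtk_succ]
      refine ⟨fun m => (hs m).summable, ?_⟩
      simp only [fun m => (hs m).tsum_eq]
      exact hsm
    have h1 := hasSum_root hsig.hasSum
    have h4 := hsig.hasSum.sigma (g := fun m : HLIdx n =>
        A j m * ∏ s : (Σ i : Fin n, Fin (m.1 i)), ∑' T : HLTree n s.1, wtk A ρ k T)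
        (fun m => by simp only [wtk_succ]; exact hs m)
    have h5 := hasSum_le hle h4 hmaj.hasSum
    rw [tsum_mul_right] at h5
    have h6 := mul_le_mul_of_nonneg_right (hC j) (sq_nonneg (2 * ρ / R))
    refine ⟨h1.summable, ?_⟩
    rw [h1.tsum_eq, wtk_leaf]
    linarith

theorem wt_sum (hA : ∀ j m, 0 ≤ A j m) (hρ : 0 ≤ ρ) {R C : ℝ} (hR : 0 < R)
    (hAs : ∀ j, Summable (fun m : HLIdx n => A j m * R ^ (∑ i, m.1 i)))
    (hC : ∀ j, ∑' m : HLIdx n, A j m * R ^ (∑ i, m.1 i) ≤ C)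
    (h2 : 2 * ρ ≤ R) (h3 : C * (2 * ρ / R) ^ 2 ≤ ρ) (j : Fin n) :
    Summable (fun T : HLTree n j => T.wt A ρ) ∧ ∑' T : HLTree n j, T.wt A ρ ≤ 2 * ρ := by
  have hb : ∀ F : Finset (HLTree n j), ∑ T ∈ F, T.wt A ρ ≤ 2 * ρ := by
    intro F
    have h : ∀ᶠ k in Filter.atTop, ∀ T ∈ F, wtk A ρ k T = T.wt A ρ :=
      (Filter.eventually_all_finset F).2 fun T _ => wtk_eventually T
    obtain ⟨k, hk⟩ := h.exists
    obtain ⟨hs, ht⟩ := wtk_sum hA hρ hR hAs hC h2 h3 k j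
    rw [← Finset.sum_congr rfl hk]
    exact (hs.sum_le_tsum F (fun T _ => wtk_nonneg hA hρ T k)).trans ht
  have hnn : ∀ T : HLTree n j, 0 ≤ T.wt A ρ := fun T => wt_nonneg hA hρ T
  exact ⟨summable_of_sum_le hnn hb, Real.tsum_le_of_sum_le hnn hb⟩

/-- Coefficient of a tree in the linearization. -/
def cf (A : Fin n → HLIdx n → ℂ) (e : Fin n → (Fin n → ℕ) → ℂ) : {j : Fin n} → HLTree n j → ℂ
  | _, leaf _ => 1
  | _, node j m cs => A j m * (e j (∑ s, (cs s).lv))⁻¹ * ∏ s, (cs s).cf A e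

theorem cf_leaf (A e) (j : Fin n) : (leaf j).cf A e = 1 := by rw [cf]
theorem cf_node (A e) (j : Fin n) (m : HLIdx n) (cs) : (node j m cs).cf A e =
    A j m * (e j (node j m cs).lv)⁻¹ * ∏ s, (cs s).cf A e := by rw [cf, lv_node]

theorem cf_bound (A : Fin n → HLIdx n → ℂ) (e : Fin n → (Fin n → ℕ) → ℂ) (hρ : 0 ≤ ρ)
    {j : Fin n} (T : HLTree n j) :
    ‖T.cf A e‖ * ρ ^ T.sz ≤
      Real.exp (T.nsum (fun j m => Real.log ‖e j m‖⁻¹)) * T.wt (fun j m => ‖A j m‖) ρ := by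
  induction T with
  | leaf j => simp [cf_leaf, sz_leaf, nsum_leaf, wt_leaf]
  | node j m cs ih =>
    rw [cf_node, nsum_node, wt_node, sz_node, ← Finset.prod_pow_eq_pow_sum, Real.exp_add,
      Real.exp_sum, norm_mul, norm_mul, norm_prod, norm_inv]
    have h1 : (∏ s, ‖(cs s).cf A e‖) * ∏ s, ρ ^ (cs s).sz ≤
        (∏ s, Real.exp ((cs s).nsum (fun j m => Real.log ‖e j m‖⁻¹))) *
          ∏ s, (cs s).wt (fun j m => ‖A j m‖) ρ := by
      rw [← Finset.prod_mul_distrib, ← Finset.prod_mul_distrib]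
      exact Finset.prod_le_prod (fun s _ => by positivity) (fun s _ => ih s)
    have h2 := Real.le_exp_log ‖e j (node j m cs).lv‖⁻¹
    calc _ = ‖A j m‖ * (‖e j (node j m cs).lv‖⁻¹ *
          ((∏ s, ‖(cs s).cf A e‖) * ∏ s, ρ ^ (cs s).sz)) := by ring
      _ ≤ ‖A j m‖ * (Real.exp (Real.log ‖e j (node j m cs).lv‖⁻¹) *
          ((∏ s, Real.exp ((cs s).nsum (fun j m => Real.log ‖e j m‖⁻¹))) *
          ∏ s, (cs s).wt (fun j m => ‖A j m‖) ρ)) := by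
        refine mul_le_mul_of_nonneg_left ?_ (norm_nonneg _)
        refine mul_le_mul h2 h1 ?_ (Real.exp_pos _).le
        exact mul_nonneg (Finset.prod_nonneg fun _ _ => norm_nonneg _)
          (Finset.prod_nonneg fun _ _ => by positivity)
      _ = _ := by ring

/-- The monomial attached to a tree. -/
def mon (A : Fin n → HLIdx n → ℂ) (e : Fin n → (Fin n → ℕ) → ℂ) (z : Fin n → ℂ) {j : Fin n}
    (T : HLTree n j) : ℂ := T.cf A e * ∏ i, z i ^ T.lv i

theorem mon_leaf (A e) (z : Fin n → ℂ) (j : Fin n) : (leaf j).mon A e z = z j := by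
  rw [mon, cf_leaf, lv_leaf, one_mul, Finset.prod_eq_single j]
  · simp
  · intro i _ hi; simp [hi]
  · simp

theorem mon_node (A e) (z : Fin n → ℂ) (j : Fin n) (m : HLIdx n) (cs) :
    (node j m cs).mon A e z = A j m * (e j (node j m cs).lv)⁻¹ * ∏ s, (cs s).mon A e z := by
  simp only [mon]
  rw [cf_node, Finset.prod_mul_distrib, Finset.prod_comm, mul_assoc, mul_assoc, mul_assoc]
  congr 4
  funext i
  rw [Finset.prod_pow_eq_pow_sum, lv_node, Finset.sum_apply]

theorem mon_scale (A e) (q z : Fin n → ℂ) {j : Fin n} (T : HLTree n j) :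
    T.mon A e (fun i => q i * z i) = (∏ i, q i ^ T.lv i) * T.mon A e z := by
  simp only [mon, mul_pow, Finset.prod_mul_distrib]
  ring

theorem mon_bound (A e) {z : Fin n → ℂ} {s : ℝ} (hz : ‖z‖ ≤ s) {j : Fin n} (T : HLTree n j) :
    ‖T.mon A e z‖ ≤ ‖T.cf A e‖ * s ^ T.sz := by
  rw [mon, norm_mul]
  exact mul_le_mul_of_nonneg_left (hl_prod_norm_le z hz _) (norm_nonneg _)

theorem mon_diff (A e) {j : Fin n} (T : HLTree n j) :
    Differentiable ℂ (fun z : Fin n → ℂ => T.mon A e z) := by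
  unfold mon
  fun_prop

end HLTree

/-- The linearizing map. -/
def hlH {n : ℕ} (A : Fin n → HLIdx n → ℂ) (e : Fin n → (Fin n → ℕ) → ℂ) (z : Fin n → ℂ)
    (j : Fin n) : ℂ := ∑' T : HLTree n j, T.mon A e z

theorem hlH_funeq {n : ℕ} (A : Fin n → HLIdx n → ℂ) (e : Fin n → (Fin n → ℕ) → ℂ)
    (q : Fin n → ℂ) (hq : ∀ j, q j ≠ 0) (he : ∀ j m, e j m = (∏ i, q i ^ m i) / q j - 1)
    (he0 : ∀ j m, 2 ≤ ∑ i, m i → e j m ≠ 0) (z : Fin n → ℂ)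
    (h1 : ∀ j, Summable (fun T : HLTree n j => ‖T.mon A e z‖))
    (h2 : ∀ j, Summable (fun T : HLTree n j => T.mon A e (fun i => q i * z i))) (j : Fin n)
    {S : ℂ} (hS : HasSum (fun m : HLIdx n => A j m * ∏ i, hlH A e z i ^ m.1 i) S) :
    q j * (hlH A e z j + S) = hlH A e (fun i => q i * z i) j := by
  have k1 := HLTree.summable_root (h1 j).of_norm
  have k2 := HLTree.summable_root (h2 j)
  have l1 := (HLTree.hasSum_root k1.hasSum).tsum_eq
  have l2 := (HLTree.hasSum_root k2.hasSum).tsum_eq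
  change hlH A e z j = _ at l1
  change hlH A e (fun i => q i * z i) j = _ at l2
  rw [HLTree.mon_leaf] at l1 l2
  have k3 := (k2.hasSum.div_const (q j)).sub k1.hasSum
  have heq : ∀ (m : HLIdx n) (cs),
      HLTree.mon A e (fun i => q i * z i) (.node j m cs) / q j - HLTree.mon A e z (.node j m cs)
      = A j m * ∏ s, (cs s).mon A e z := by
    intro m cs
    have hne := he0 j _ (HLTree.sz_node_ge j m cs)
    have : HLTree.mon A e (fun i => q i * z i) (.node j m cs) / q j -
        HLTree.mon A e z (.node j m cs) =
        e j (HLTree.node j m cs).lv * HLTree.mon A e z (.node j m cs) := by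
      rw [HLTree.mon_scale, he]; ring
    rw [this, HLTree.mon_node]
    field_simp
  simp only [heq] at k3
  have k4 := k3.sigma (g := fun m : HLIdx n => A j m * ∏ i, hlH A e z i ^ m.1 i) (fun m => by
    have := (hl_pi_hasSum (fun s : (Σ i : Fin n, Fin (m.1 i)) =>
        fun T : HLTree n s.1 => T.mon A e z) (fun s => h1 s.1)).mul_left (A j m)
    have hp : ∏ s : (Σ i : Fin n, Fin (m.1 i)), ∑' T : HLTree n s.1, T.mon A e z =
        ∏ i, hlH A e z i ^ m.1 i := by
      rw [Fintype.prod_sigma]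
      simp [hlH]
    rw [hp] at this
    exact this)
  have k5 := hS.unique k4
  rw [k5, l2, l1]
  have := hq j
  field_simp
  ring

/-- Bruno–Rüssmann theorem for diffeomorphisms: if `q = (e^{2πiλ₁},…,e^{2πiλ_ν})` is
non-resonant and satisfies the Bruno condition `𝓑(q) < ∞`, and the nonlinear part `a` is
holomorphic near `0` with `a(0) = 0`, `Da(0) = 0`, then the linearization problem for
`g = R_q ∘ (id + a)` has a convergent solution `h` with `h(0) = 0`, `Dh(0) = id` and
`g(h(z)) = h(R_q z)` near `0`. -/
theorem holomorphic_linearization_diffeo (ν : ℕ) (lam q : Fin ν → ℂ)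
    (hq : ∀ j, q j = Complex.exp (2 * Real.pi * Complex.I * lam j))
    (hres : NonResonantQ q)
    (hB : Summable (brunoTermD lam))
    (a : (Fin ν → ℂ) → (Fin ν → ℂ)) (b : ℝ) (hb : 0 < b)
    (ha : DifferentiableOn ℂ a (Metric.ball 0 b))
    (ha0 : a 0 = 0) (hDa : fderiv ℂ a 0 = 0) :
    ∃ r > 0, ∃ h : (Fin ν → ℂ) → (Fin ν → ℂ),
      DifferentiableOn ℂ h (Metric.ball 0 r) ∧ h 0 = 0 ∧
      fderiv ℂ h 0 = ContinuousLinearMap.id ℂ (Fin ν → ℂ) ∧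
      ∃ ε > 0, ∀ z ∈ Metric.ball (0 : Fin ν → ℂ) ε,
        (fun i => q i * (h z i + a (h z) i)) = h fun i => q i * z i := by
  have hq0 : ∀ j, q j ≠ 0 := fun j => by rw [hq]; exact Complex.exp_ne_zero _
  have hda : DifferentiableAt ℂ a 0 := ha.differentiableAt (ball_mem_nhds _ hb)
  have hexp : ∀ j : Fin ν, ∃ R > 0, ∃ c : HLIdx ν → ℂ,
      Summable (fun m : HLIdx ν => ‖c m‖ * R ^ (∑ i, m.1 i)) ∧
      ∀ z : Fin ν → ℂ, ‖z‖ ≤ R → HasSum (fun m : HLIdx ν => c m * ∏ i, z i ^ m.1 i) (a z j) := by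
    intro j
    refine hl_expand hb (f := fun z => a z j) (fun z hz => differentiableWithinAt_pi.1 (ha z hz) j)
      (by rw [ha0]; rfl) ?_
    have h1 := (hasFDerivAt_pi'.1 hda.hasFDerivAt) j
    rw [hDa, ContinuousLinearMap.comp_zero] at h1
    exact h1.fderiv
  choose Rj hRj A hA1 hA2 using hexp
  obtain ⟨R, hR0, hRle⟩ : ∃ R : ℝ, 0 < R ∧ ∀ j, R ≤ Rj j := by
    have h1 : ∀ᶠ R in nhdsWithin (0 : ℝ) (Set.Ioi 0), ∀ j, R ≤ Rj j :=
      Filter.eventually_all.2 fun j =>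
        nhdsWithin_le_nhds ((eventually_lt_nhds (hRj j)).mono fun _ h => h.le)
    obtain ⟨R, h2, h3⟩ := (h1.and self_mem_nhdsWithin).exists
    exact ⟨R, h3, h2⟩
  have hAs : ∀ j, Summable (fun m : HLIdx ν => ‖A j m‖ * R ^ (∑ i, m.1 i)) := by
    intro j
    refine Summable.of_nonneg_of_le (fun m => by positivity) (fun m => ?_) (hA1 j)
    gcongr
    exact hRle j
  have hAnn : ∀ j, 0 ≤ ∑' m : HLIdx ν, ‖A j m‖ * R ^ (∑ i, m.1 i) :=
    fun j => tsum_nonneg fun m => by positivity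
  set C := ∑ j, ∑' m : HLIdx ν, ‖A j m‖ * R ^ (∑ i, m.1 i) with hCdef
  have hC0 : 0 ≤ C := Finset.sum_nonneg fun j _ => hAnn j
  have hC : ∀ j, ∑' m : HLIdx ν, ‖A j m‖ * R ^ (∑ i, m.1 i) ≤ C := fun j =>
    Finset.single_le_sum (f := fun j => ∑' m : HLIdx ν, ‖A j m‖ * R ^ (∑ i, m.1 i))
      (fun j _ => hAnn j) (Finset.mem_univ j)
  obtain ⟨ρ, hρ, h2ρ, h3ρ⟩ : ∃ ρ : ℝ, 0 < ρ ∧ 2 * ρ ≤ R ∧ C * (2 * ρ / R) ^ 2 ≤ ρ := by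
    have hCR : 0 < C + R := by linarith
    refine ⟨R ^ 2 / (4 * (C + R)), by positivity, ?_, ?_⟩
    · rw [← mul_div_assoc, div_le_iff₀ (by positivity)]
      nlinarith
    · have h1 : C * (2 * (R ^ 2 / (4 * (C + R))) / R) ^ 2 =
          R ^ 2 / (4 * (C + R)) * (C / (C + R)) := by
        field_simp
        ring
      rw [h1]
      refine mul_le_of_le_one_right (by positivity) ?_
      rw [div_le_one hCR]; linarith
  obtain ⟨Cb, hCb, hbr⟩ := hl_bruno lam q hq hres hB
  set e := hlE lam with hedef
  set r := ρ * Real.exp (-Cb) with hrdef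
  have hr0 : 0 < r := by positivity
  set W : ∀ j, HLTree ν j → ℝ := fun j T => T.wt (fun j m => ‖A j m‖) ρ with hWdef
  have hW : ∀ j, Summable (W j) ∧ ∑' T, W j T ≤ 2 * ρ := fun j =>
    HLTree.wt_sum (fun j m => norm_nonneg _) hρ.le hR0 hAs hC h2ρ h3ρ j
  have hcf : ∀ j (T : HLTree ν j), ‖T.cf A e‖ * r ^ T.sz ≤ W j T := by
    intro j T
    have h1 := HLTree.cf_bound A e hρ.le T
    have h2 : Real.exp (T.nsum (fun j m => Real.log ‖e j m‖⁻¹)) ≤ Real.exp Cb ^ T.sz := by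
      rw [← Real.exp_nat_mul, mul_comm]
      exact Real.exp_le_exp.2 (hbr j T)
    have hWn : 0 ≤ W j T := HLTree.wt_nonneg (fun j m => norm_nonneg _) hρ.le T
    rw [hrdef, mul_pow, Real.exp_neg, inv_pow, ← mul_assoc, ← div_eq_mul_inv,
      div_le_iff₀ (by positivity), mul_comm (W j T)]
    exact h1.trans (mul_le_mul_of_nonneg_right h2 hWn)
  have hmon : ∀ j (T : HLTree ν j) (z : Fin ν → ℂ), ‖z‖ ≤ r → ‖T.mon A e z‖ ≤ W j T :=
    fun j T z hz => (HLTree.mon_bound A e hz T).trans (hcf j T)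
  have hsum : ∀ j (z : Fin ν → ℂ), ‖z‖ ≤ r → Summable (fun T : HLTree ν j => ‖T.mon A e z‖) :=
    fun j z hz => Summable.of_nonneg_of_le (fun _ => norm_nonneg _) (fun T => hmon j T z hz)
      (hW j).1
  have hHR : ∀ z : Fin ν → ℂ, ‖z‖ ≤ r → ‖hlH A e z‖ ≤ R := by
    intro z hz
    rw [pi_norm_le_iff_of_nonneg hR0.le]
    intro j
    have h1 : ‖hlH A e z j‖ ≤ ∑' T, W j T :=
      tsum_of_norm_bounded (hW j).1.hasSum (fun T => hmon j T z hz)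
    linarith [(hW j).2]
  have hest : ∀ z : Fin ν → ℂ, ‖z‖ ≤ r → ‖hlH A e z - z‖ ≤ 2 * ρ * (‖z‖ / r) ^ 2 := by
    intro z hz
    rw [pi_norm_le_iff_of_nonneg (by positivity)]
    intro j
    have k1 := HLTree.summable_root (hsum j z hz).of_norm
    have k2 := HLTree.summable_root (hW j).1
    have l1 := (HLTree.hasSum_root k1.hasSum).tsum_eq
    have l2 := (HLTree.hasSum_root k2.hasSum).tsum_eq
    change hlH A e z j = _ at l1
    rw [HLTree.mon_leaf] at l1
    have l3 : W j (HLTree.leaf j) = ρ := HLTree.wt_leaf _ _ _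
    rw [l3] at l2
    have hle := tsum_of_norm_bounded (k2.hasSum.mul_right ((‖z‖ / r) ^ 2)) (fun p => by
      refine (HLTree.mon_bound A e (le_refl ‖z‖) (HLTree.node j p.1 p.2)).trans ?_
      refine le_trans ?_ (mul_le_mul_of_nonneg_right (hcf j _) (sq_nonneg _))
      rw [mul_assoc]
      exact mul_le_mul_of_nonneg_left
        (hl_pow_two_le hr0 (norm_nonneg _) hz (HLTree.sz_node_ge j p.1 p.2)) (norm_nonneg _))
    rw [Pi.sub_apply, l1, add_sub_cancel_left]
    refine hle.trans (mul_le_mul_of_nonneg_right ?_ (sq_nonneg _))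
    linarith [(hW j).2]
  have hH0 : hlH A e 0 = 0 := by
    have := hest 0 (by simpa using hr0.le)
    simpa using this
  refine ⟨r / 2, by positivity, hlH A e, ?_, hH0, ?_, ?_⟩
  · rw [differentiableOn_pi]
    intro j
    exact hl_diff_tsum hr0 (fun T => (HLTree.mon_diff A e T).differentiableOn) (hW j).1
      (fun T z hz => hmon j T z (mem_ball_zero_iff.1 hz).le)
  · have hO : (fun z : Fin ν → ℂ => hlH A e z - z) =O[nhds 0] fun z => ‖z - 0‖ ^ 2 := by
      refine Asymptotics.IsBigO.of_bound (2 * ρ / r ^ 2) ?_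
      filter_upwards [closedBall_mem_nhds (0 : Fin ν → ℂ) hr0] with z hz
      refine (hest z (by simpa using hz)).trans_eq ?_
      simp
      ring
    have h1 := (hO.hasFDerivAt (𝕜 := ℂ) one_lt_two).add (hasFDerivAt_id (𝕜 := ℂ) (0 : Fin ν → ℂ))
    have h2 : (fun z : Fin ν → ℂ => hlH A e z - z) + id = hlH A e := by
      funext z
      simp
    rw [h2, zero_add] at h1
    exact h1.fderiv
  · refine ⟨r / (1 + ‖q‖), by positivity, fun z hz => ?_⟩
    have hz1 : ‖z‖ * (1 + ‖q‖) < r := (lt_div_iff₀ (by positivity)).1 (mem_ball_zero_iff.1 hz)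
    have hzr : ‖z‖ ≤ r := by nlinarith [norm_nonneg z, norm_nonneg q]
    have hqz : ‖(fun i => q i * z i : Fin ν → ℂ)‖ ≤ r := by
      rw [pi_norm_le_iff_of_nonneg hr0.le]
      intro i
      rw [norm_mul]
      have h1 := mul_le_mul (norm_le_pi_norm q i) (norm_le_pi_norm z i) (norm_nonneg _)
        (norm_nonneg _)
      nlinarith [norm_nonneg z]
    funext j
    exact hlH_funeq A e q hq0 (hlE_eq lam q hq) (hlE_ne lam q hq hres) z
      (fun j => hsum j z hzr) (fun j => (hsum j _ hqz).of_norm) j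
      (hA2 j _ ((hHR z hzr).trans (hRle j)))
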